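/- arXiv:1807.01188 — 9 statements merged into one kernel-verified Lean document; each statement's English description precedes it below -/
import Mathlib

section
/- Let G be a finite simple graph with p vertices and q ≥ 1 edges and no isolated vertices, and let k ≥ 1. If f is a k-super graceful labeling of G, then each of the k largest integers p+q, p+q+1, …, k+p+q−1 in {k, …, k+p+q−1} is the label f(v) of some vertex v, these k vertices are pairwise non-adjacent, and no two of the k+1 smallest integers k, k+1, …, 2k are labels of two adjacent vertices. -/
/-- `f : V ⊕ E(G) → ℕ` is a `k`-super graceful labeling of `G`:
a bijection from vertices and edges onto `{k, …, k+p+q-1}` with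
`f(uv) = |f(u) - f(v)|` for every edge `uv`. -/
def IsKSuperGraceful {V : Type} [Fintype V] (G : SimpleGraph V) (k : ℕ)
    (f : V ⊕ G.edgeSet → ℕ) : Prop :=
  Function.Injective f ∧
  Set.range f = Set.Icc k (k + Fintype.card V + G.edgeSet.ncard - 1) ∧
  ∀ (u v : V) (h : G.Adj u v),
    f (Sum.inr ⟨s(u, v), (G.mem_edgeSet).mpr h⟩) =
      max (f (Sum.inl u)) (f (Sum.inl v)) - min (f (Sum.inl u)) (f (Sum.inl v))

/-!
Adjacent vertices have labels differing by an edge label, hence by at least `k`, and by at most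
the spread `p + q - 1` of all labels. So edge labels are below `p + q`, leaving the `k` largest
labels to vertices, and these lie too close together to be adjacent. Two adjacent labels at most
`2k` would have to be `k` and `2k`, but then the edge between them would also be labeled `k`.
-/

namespace IsKSuperGraceful

variable {V : Type} [Fintype V] {G : SimpleGraph V} {k : ℕ} {f : V ⊕ G.edgeSet → ℕ} {u v : V}

theorem apply_mem_Ico (hf : IsKSuperGraceful G k f) (x : V ⊕ G.edgeSet) :
    f x ∈ Set.Ico k (k + Fintype.card V + G.edgeSet.ncard) := by
  have hV : Nonempty V := by
    rcases x with v | ⟨⟨v, _⟩, _⟩ <;> exact ⟨v⟩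
  have hcard : 0 < Fintype.card V := Fintype.card_pos
  have hx : f x ∈ Set.Icc k (k + Fintype.card V + G.edgeSet.ncard - 1) :=
    hf.2.1 ▸ Set.mem_range_self x
  exact ⟨hx.1, hx.2.trans_lt (by lia)⟩

theorem min_add_apply_edge (hf : IsKSuperGraceful G k f) (huv : G.Adj u v) :
    min (f (Sum.inl u)) (f (Sum.inl v)) + f (Sum.inr ⟨s(u, v), huv⟩) =
      max (f (Sum.inl u)) (f (Sum.inl v)) := by
  rw [hf.2.2 u v huv, Nat.add_sub_cancel' min_le_max]

theorem le_min_apply (hf : IsKSuperGraceful G k f) (u v : V) :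
    k ≤ min (f (Sum.inl u)) (f (Sum.inl v)) :=
  le_min (hf.apply_mem_Ico _).1 (hf.apply_mem_Ico _).1

theorem apply_edge_lt (hf : IsKSuperGraceful G k f) (e : G.edgeSet) :
    f (Sum.inr e) < Fintype.card V + G.edgeSet.ncard := by
  obtain ⟨⟨u, v⟩, huv⟩ := e
  have hmax : max (f (Sum.inl u)) (f (Sum.inl v)) < k + Fintype.card V + G.edgeSet.ncard :=
    max_lt (hf.apply_mem_Ico _).2 (hf.apply_mem_Ico _).2
  rw [← hf.min_add_apply_edge huv, add_assoc] at hmax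
  exact lt_of_add_lt_add_left ((Nat.add_le_add_right (hf.le_min_apply u v) _).trans_lt hmax)

theorem Ico_subset_range_inl (hf : IsKSuperGraceful G k f) (hG : G.edgeSet.Nonempty) :
    Set.Ico (Fintype.card V + G.edgeSet.ncard) (k + Fintype.card V + G.edgeSet.ncard) ⊆
      Set.range fun v ↦ f (Sum.inl v) := by
  rintro m ⟨hm_ge, hm_lt⟩
  obtain ⟨e, he⟩ := hG
  have hkm : k ≤ m :=
    (hf.apply_mem_Ico (Sum.inr ⟨e, he⟩)).1.trans ((hf.apply_edge_lt _).le.trans hm_ge)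
  obtain ⟨v | e', rfl⟩ : m ∈ Set.range f := hf.2.1 ▸ ⟨hkm, Nat.le_sub_one_of_lt hm_lt⟩
  · exact ⟨v, rfl⟩
  · exact absurd (hf.apply_edge_lt e') hm_ge.not_gt

theorem min_add_le_max_of_adj (hf : IsKSuperGraceful G k f) (huv : G.Adj u v) :
    min (f (Sum.inl u)) (f (Sum.inl v)) + k ≤ max (f (Sum.inl u)) (f (Sum.inl v)) := by
  rw [← hf.min_add_apply_edge huv]
  gcongr
  exact (hf.apply_mem_Ico _).1

theorem not_adj_of_mem_Ico (hf : IsKSuperGraceful G k f) {a : ℕ}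
    (hu : f (Sum.inl u) ∈ Set.Ico a (k + a)) (hv : f (Sum.inl v) ∈ Set.Ico a (k + a)) :
    ¬ G.Adj u v := by
  intro huv
  have hmin : a ≤ min (f (Sum.inl u)) (f (Sum.inl v)) := le_min hu.1 hv.1
  have hmax : max (f (Sum.inl u)) (f (Sum.inl v)) < k + a := max_lt hu.2 hv.2
  have hgap := hf.min_add_le_max_of_adj huv
  lia

theorem two_mul_lt_max_of_adj (hf : IsKSuperGraceful G k f) (huv : G.Adj u v) :
    2 * k < max (f (Sum.inl u)) (f (Sum.inl v)) := by
  have hmin : k ≤ min (f (Sum.inl u)) (f (Sum.inl v)) := hf.le_min_apply u v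
  have hedge : k ≤ f (Sum.inr ⟨s(u, v), huv⟩) := (hf.apply_mem_Ico _).1
  have hne : min (f (Sum.inl u)) (f (Sum.inl v)) ≠ f (Sum.inr ⟨s(u, v), huv⟩) := by
    rcases min_choice (f (Sum.inl u)) (f (Sum.inl v)) with h | h <;>
      (rw [h]; exact hf.1.ne Sum.inl_ne_inr)
  rw [← hf.min_add_apply_edge huv]
  lia

end IsKSuperGraceful

theorem stmt_0_general {V : Type} [Fintype V] (G : SimpleGraph V) (k : ℕ)
    (hq : 1 ≤ G.edgeSet.ncard) (f : V ⊕ G.edgeSet → ℕ) (hf : IsKSuperGraceful G k f) :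
    (∀ m ∈ Set.Icc (Fintype.card V + G.edgeSet.ncard)
        (k + Fintype.card V + G.edgeSet.ncard - 1), ∃ v : V, f (Sum.inl v) = m) ∧
    (∀ u v : V,
        f (Sum.inl u) ∈ Set.Icc (Fintype.card V + G.edgeSet.ncard)
          (k + Fintype.card V + G.edgeSet.ncard - 1) →
        f (Sum.inl v) ∈ Set.Icc (Fintype.card V + G.edgeSet.ncard)
          (k + Fintype.card V + G.edgeSet.ncard - 1) →
        ¬ G.Adj u v) ∧
    (∀ u v : V, G.Adj u v →
        ¬ (f (Sum.inl u) ∈ Set.Icc k (2 * k) ∧ f (Sum.inl v) ∈ Set.Icc k (2 * k))) := by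
  have hG : G.edgeSet.Nonempty := Set.nonempty_of_ncard_ne_zero (Nat.one_le_iff_ne_zero.mp hq)
  have hIco : Set.Icc (Fintype.card V + G.edgeSet.ncard)
      (k + Fintype.card V + G.edgeSet.ncard - 1) =
        Set.Ico (Fintype.card V + G.edgeSet.ncard) (k + Fintype.card V + G.edgeSet.ncard) :=
    Set.ext fun m ↦ and_congr_right fun _ ↦ Nat.le_sub_one_iff_lt (by lia)
  rw [hIco]
  refine ⟨hf.Ico_subset_range_inl hG, fun u v hu hv ↦ ?_, fun u v huv ⟨hu, hv⟩ ↦ ?_⟩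
  · rw [add_assoc] at hu hv
    exact hf.not_adj_of_mem_Ico hu hv
  · exact (hf.two_mul_lt_max_of_adj huv).not_ge (max_le hu.2 hv.2)

/-- If `f` is a `k`-super graceful labeling of `G`, then the `k` largest labels
`p+q, …, k+p+q-1` are labels of vertices, those vertices are pairwise non-adjacent,
and no two of the `k+1` smallest labels `k, …, 2k` label adjacent vertices. -/
theorem stmt_0 {V : Type} [Fintype V] (G : SimpleGraph V) (k : ℕ) (hk : 1 ≤ k)
    (hq : 1 ≤ G.edgeSet.ncard) (hiso : ∀ v : V, ∃ u : V, G.Adj v u)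
    (f : V ⊕ G.edgeSet → ℕ) (hf : IsKSuperGraceful G k f) :
    (∀ m ∈ Set.Icc (Fintype.card V + G.edgeSet.ncard)
        (k + Fintype.card V + G.edgeSet.ncard - 1), ∃ v : V, f (Sum.inl v) = m) ∧
    (∀ u v : V,
        f (Sum.inl u) ∈ Set.Icc (Fintype.card V + G.edgeSet.ncard)
          (k + Fintype.card V + G.edgeSet.ncard - 1) →
        f (Sum.inl v) ∈ Set.Icc (Fintype.card V + G.edgeSet.ncard)
          (k + Fintype.card V + G.edgeSet.ncard - 1) →
        ¬ G.Adj u v) ∧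
    (∀ u v : V, G.Adj u v →
        ¬ (f (Sum.inl u) ∈ Set.Icc k (2 * k) ∧ f (Sum.inl v) ∈ Set.Icc k (2 * k))) :=
  stmt_0_general G k hq f hf
end

section
/- Let G be a finite simple graph with p vertices and q ≥ 1 edges and no isolated vertices. If G is k-super graceful for some integer k ≥ 1, then 1 ≤ k ≤ α(G), where α(G) is the independence number of G (the maximum size of a set of pairwise non-adjacent vertices of G). -/
/-!
Let the labels fill the interval `[k, N]`. An edge label is a difference of two vertex labels, so
it is at most `N - k`; since it is also at least `k`, one edge suffices for `k ≤ N - k`. Hence each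
of the `k` top labels `N - k + 1, …, N` occurs, and only on vertices. Two of these labels differ by
less than `k`, which is too little for an edge label, so the vertices carrying them are pairwise
non-adjacent.
-/

/-- Labelings of the vertices and edges of `G` in which each edge `uv` carries the absolute
difference of the labels of `u` and `v`. Neither injectivity nor a set of admissible labels is
imposed; a `k`-super graceful labeling adds both. As subtraction on `ℕ` truncates, the absolute
difference is written `max - min`. -/
def IsDifferenceLabeling {V : Type*} (G : SimpleGraph V) (f : V ⊕ G.edgeSet → ℕ) : Prop :=
  ∀ (u v : V) (h : G.Adj u v),
    f (Sum.inr ⟨s(u, v), G.mem_edgeSet.mpr h⟩) =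
      max (f (Sum.inl u)) (f (Sum.inl v)) - min (f (Sum.inl u)) (f (Sum.inl v))

namespace IsDifferenceLabeling

variable {V : Type*} {G : SimpleGraph V} {f : V ⊕ G.edgeSet → ℕ} {k N : ℕ}

theorem edge_add_le (hf : IsDifferenceLabeling G f)
    (hvertex : ∀ v, f (Sum.inl v) ∈ Set.Icc k N) (e : G.edgeSet) : f (Sum.inr e) + k ≤ N := by
  obtain ⟨e, he⟩ := e
  induction e with
  | h u v =>
    have hlabel := hf u v he
    obtain ⟨hku, huN⟩ := hvertex u
    obtain ⟨hkv, hvN⟩ := hvertex v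
    omega

theorem isIndepSet_setOf_lt_add (hf : IsDifferenceLabeling G f)
    (hvertex : ∀ v, f (Sum.inl v) ≤ N) (hedge : ∀ e, k ≤ f (Sum.inr e)) :
    G.IsIndepSet {v | N < f (Sum.inl v) + k} := by
  intro u (hu : N < f (Sum.inl u) + k) v (hv : N < f (Sum.inl v) + k) _ hadj
  have hlabel := hf u v hadj
  have hklabel := hedge ⟨s(u, v), hadj⟩
  have huN := hvertex u
  have hvN := hvertex v
  omega

theorem two_mul_le (hf : IsDifferenceLabeling G f) (hmem : ∀ x, f x ∈ Set.Icc k N)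
    (hG : G.edgeSet.Nonempty) : 2 * k ≤ N := by
  obtain ⟨e, he⟩ := hG
  calc 2 * k = k + k := two_mul k
    _ ≤ f (Sum.inr ⟨e, he⟩) + k := Nat.add_le_add_right (hmem _).1 k
    _ ≤ N := hf.edge_add_le (fun v ↦ hmem (Sum.inl v)) ⟨e, he⟩

theorem surjOn_Ioc (hf : IsDifferenceLabeling G f) (hrange : Set.range f = Set.Icc k N)
    (hkN : 2 * k ≤ N) :
    Set.SurjOn (fun v ↦ f (Sum.inl v)) {v | N < f (Sum.inl v) + k} (Set.Ioc (N - k) N) := by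
  rintro n ⟨hn, hnN⟩
  obtain ⟨v | e, rfl⟩ : n ∈ Set.range f := hrange ▸ ⟨by omega, hnN⟩
  · exact ⟨v, lt_add_of_tsub_lt_right hn, rfl⟩
  · have := hf.edge_add_le (fun v ↦ hrange ▸ Set.mem_range_self (Sum.inl v)) e
    omega

end IsDifferenceLabeling

theorem stmt_1_general {V : Type*} {G : SimpleGraph V} {k N : ℕ} {f : V ⊕ G.edgeSet → ℕ}
    (hf : IsDifferenceLabeling G f) (hrange : Set.range f = Set.Icc k N)
    (hG : G.edgeSet.Nonempty) : ∃ s : Finset V, G.IsNIndepSet k s := by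
  have hmem : ∀ x, f x ∈ Set.Icc k N := fun x ↦ hrange ▸ Set.mem_range_self x
  have hkN : 2 * k ≤ N := hf.two_mul_le hmem hG
  have hindep : G.IsIndepSet {v | N < f (Sum.inl v) + k} :=
    hf.isIndepSet_setOf_lt_add (fun v ↦ (hmem (Sum.inl v)).2) (fun e ↦ (hmem (Sum.inr e)).1)
  have hsurj : Set.SurjOn (fun v ↦ f (Sum.inl v)) {v | N < f (Sum.inl v) + k}
      (Finset.Ioc (N - k) N) := by
    simpa only [Finset.coe_Ioc] using hf.surjOn_Ioc hrange hkN
  obtain ⟨s, hs, hinj, himage⟩ := Finset.exists_subset_injOn_image_eq_of_surjOn _ _ hsurj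
  refine ⟨s, hindep.mono hs, ?_⟩
  calc s.card = (Finset.Ioc (N - k) N).card := by rw [← himage, Finset.card_image_of_injOn hinj]
    _ = N - (N - k) := Nat.card_Ioc _ _
    _ = k := by omega

/-- If `G` (with at least one edge and no isolated vertex) is `k`-super graceful,
then `1 ≤ k ≤ α(G)`: in particular there is an independent set of size at least `k`. -/
theorem stmt_1 {V : Type} [Fintype V] [DecidableEq V] (G : SimpleGraph V) (k : ℕ)
    (hk : 1 ≤ k) (hq : 1 ≤ G.edgeSet.ncard) (hiso : ∀ v : V, ∃ u : V, G.Adj v u)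
    (hsg : ∃ f : V ⊕ G.edgeSet → ℕ, IsKSuperGraceful G k f) :
    1 ≤ k ∧ ∃ s : Finset V,
      (∀ u ∈ s, ∀ v ∈ s, u ≠ v → ¬ G.Adj u v) ∧ k ≤ s.card := by
  obtain ⟨f, -, hrange, hf⟩ := hsg
  obtain ⟨s, hs⟩ := stmt_1_general hf hrange (Set.nonempty_of_ncard_ne_zero (by omega))
  exact ⟨hk, s, hs.isIndepSet, hs.card_eq.ge⟩
end

section
/- Let G be a finite simple graph with p vertices and q ≥ 1 edges and no isolated vertices, and let k ≥ 1. If G admits a k-super graceful labeling f in which f(v) is odd for every vertex v, then p = q + 1 and k = 1. -/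
/-! With `p` vertices, `q` edges and largest label `N = k + p + q - 1`, differences of odd numbers
are even, so the edge labels are exactly the even members of `[k, N]`. An edge label, being a
difference of two labels, is at most `N - k`; the even one among `N - 1` and `N` thus forces
`k = 1`, and then `N = p + q` is odd. Counting the even members of `[1, p + q]` gives
`q = ⌊(p + q) / 2⌋`, that is, `p = q + 1`. -/

namespace IsKSuperGraceful

variable {V : Type} [Fintype V] {G : SimpleGraph V} {k : ℕ} {f : V ⊕ G.edgeSet → ℕ}

theorem apply_mem_Icc (hf : IsKSuperGraceful G k f) (x : V ⊕ G.edgeSet) :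
    f x ∈ Set.Icc k (k + Fintype.card V + G.edgeSet.ncard - 1) :=
  hf.2.1 ▸ Set.mem_range_self x

theorem exists_adj_apply_inr_add_eq (hf : IsKSuperGraceful G k f) (e : G.edgeSet) :
    ∃ u v, G.Adj u v ∧ f (.inr e) + f (.inl v) = f (.inl u) := by
  obtain ⟨e, he⟩ := e
  induction e using Sym2.ind with
  | _ a b =>
    have hab : G.Adj a b := he
    have hlabel := hf.2.2 a b hab
    rcases le_total (f (.inl b)) (f (.inl a)) with hle | hle
    · exact ⟨a, b, hab, by omega⟩
    · exact ⟨b, a, hab.symm, by omega⟩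

theorem apply_inr_pos (hf : IsKSuperGraceful G k f) (e : G.edgeSet) : 0 < f (.inr e) := by
  obtain ⟨u, v, huv, hsum⟩ := hf.exists_adj_apply_inr_add_eq e
  have hne : f (.inl u) ≠ f (.inl v) := hf.1.ne (Sum.inl_injective.ne huv.ne)
  omega

theorem apply_inr_add_le (hf : IsKSuperGraceful G k f) (e : G.edgeSet) :
    f (.inr e) + k ≤ k + Fintype.card V + G.edgeSet.ncard - 1 := by
  obtain ⟨u, v, -, hsum⟩ := hf.exists_adj_apply_inr_add_eq e
  calc
    f (.inr e) + k ≤ f (.inr e) + f (.inl v) := by gcongr; exact (hf.apply_mem_Icc _).1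
    _ = f (.inl u) := hsum
    _ ≤ k + Fintype.card V + G.edgeSet.ncard - 1 := (hf.apply_mem_Icc _).2

theorem even_apply_inr (hf : IsKSuperGraceful G k f) (hodd : ∀ v, Odd (f (.inl v)))
    (e : G.edgeSet) : Even (f (.inr e)) := by
  obtain ⟨u, v, -, hsum⟩ := hf.exists_adj_apply_inr_add_eq e
  exact (Nat.odd_add'.mp (hsum ▸ hodd u)).mp (hodd v)

theorem range_comp_inr (hf : IsKSuperGraceful G k f) (hodd : ∀ v, Odd (f (.inl v))) :
    Set.range (f ∘ Sum.inr) =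
      {n ∈ Set.Icc k (k + Fintype.card V + G.edgeSet.ncard - 1) | Even n} := by
  ext n
  constructor
  · rintro ⟨e, rfl⟩
    exact ⟨hf.apply_mem_Icc _, hf.even_apply_inr hodd e⟩
  · rintro ⟨hn, heven⟩
    rw [← hf.2.1] at hn
    obtain ⟨v | e, rfl⟩ := hn
    · exact absurd heven (Nat.not_even_iff_odd.mpr (hodd v))
    · exact ⟨e, rfl⟩

theorem exists_apply_inr_eq_of_even (hf : IsKSuperGraceful G k f)
    (hodd : ∀ v, Odd (f (.inl v))) {n : ℕ} (hkn : k ≤ n)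
    (hn : n ≤ k + Fintype.card V + G.edgeSet.ncard - 1) (heven : Even n) :
    ∃ e : G.edgeSet, f (.inr e) = n :=
  (hf.range_comp_inr hodd).ge ⟨⟨hkn, hn⟩, heven⟩

theorem pos_of_odd (hf : IsKSuperGraceful G k f) (hodd : ∀ v, Odd (f (.inl v))) : 0 < k := by
  by_contra! hk
  obtain ⟨e, he⟩ := hf.exists_apply_inr_eq_of_even hodd hk (Nat.zero_le _) Even.zero
  exact (hf.apply_inr_pos e).ne' he

theorem odd_max_of_odd [Nonempty V] (hf : IsKSuperGraceful G k f)
    (hodd : ∀ v, Odd (f (.inl v))) : Odd (k + Fintype.card V + G.edgeSet.ncard - 1) := by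
  by_contra hmax
  have hp : 0 < Fintype.card V := Fintype.card_pos
  have hk : 0 < k := hf.pos_of_odd hodd
  obtain ⟨e, he⟩ :=
    hf.exists_apply_inr_eq_of_even hodd (by omega) le_rfl (Nat.not_odd_iff_even.mp hmax)
  have hle := hf.apply_inr_add_le e
  omega

theorem eq_one_of_odd [Nonempty V] (hf : IsKSuperGraceful G k f)
    (hodd : ∀ v, Odd (f (.inl v))) (hq : 1 ≤ G.edgeSet.ncard) : k = 1 := by
  have hp : 0 < Fintype.card V := Fintype.card_pos
  have hk : 0 < k := hf.pos_of_odd hodd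
  obtain ⟨m, hm⟩ := hf.odd_max_of_odd hodd
  obtain ⟨e, he⟩ :=
    hf.exists_apply_inr_eq_of_even hodd (n := 2 * m) (by omega) (by omega) (even_two_mul m)
  have hle := hf.apply_inr_add_le e
  omega

theorem ncard_edgeSet_eq_div_two (hf : IsKSuperGraceful G 1 f)
    (hodd : ∀ v, Odd (f (.inl v))) :
    G.edgeSet.ncard = (Fintype.card V + G.edgeSet.ncard) / 2 := by
  have hrange : Set.range (f ∘ Sum.inr) =
      ({n ∈ Finset.Ioc 0 (Fintype.card V + G.edgeSet.ncard) | 2 ∣ n} : Finset ℕ) := by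
    rw [hf.range_comp_inr hodd]
    ext n
    simp only [Set.mem_ofPred_eq, Set.mem_Icc, Finset.coe_filter, Finset.mem_Ioc,
      even_iff_two_dvd]
    omega
  calc
    G.edgeSet.ncard = (Set.range (f ∘ Sum.inr)).ncard :=
      (Set.ncard_range_of_injective (hf.1.comp Sum.inr_injective)).symm
    _ = (Fintype.card V + G.edgeSet.ncard) / 2 := by
      rw [hrange, Set.ncard_coe_finset, Nat.Ioc_filter_dvd_card_eq_div]

end IsKSuperGraceful

theorem stmt_2_general {V : Type} [Fintype V] {G : SimpleGraph V} {k : ℕ}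
    {f : V ⊕ G.edgeSet → ℕ} (hf : IsKSuperGraceful G k f) (hodd : ∀ v, Odd (f (.inl v)))
    (hq : 1 ≤ G.edgeSet.ncard) : Fintype.card V = G.edgeSet.ncard + 1 ∧ k = 1 := by
  obtain ⟨e, he⟩ := Set.nonempty_of_ncard_ne_zero (Nat.ne_of_gt hq)
  obtain ⟨v, -⟩ := hf.exists_adj_apply_inr_add_eq ⟨e, he⟩
  have : Nonempty V := ⟨v⟩
  obtain rfl : k = 1 := hf.eq_one_of_odd hodd hq
  have hmax : Odd (1 + Fintype.card V + G.edgeSet.ncard - 1) := hf.odd_max_of_odd hodd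
  have hhalf : G.edgeSet.ncard = (Fintype.card V + G.edgeSet.ncard) / 2 :=
    hf.ncard_edgeSet_eq_div_two hodd
  rw [Nat.odd_iff] at hmax
  exact ⟨by omega, rfl⟩

/-- If `G` admits a `k`-super graceful labeling with every vertex label odd,
then `G` is a `(q+1, q)`-graph and `k = 1`. -/
theorem stmt_2 {V : Type} [Fintype V] (G : SimpleGraph V) (k : ℕ) (hk : 1 ≤ k)
    (hq : 1 ≤ G.edgeSet.ncard) (hiso : ∀ v : V, ∃ u : V, G.Adj v u)
    (f : V ⊕ G.edgeSet → ℕ) (hf : IsKSuperGraceful G k f)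
    (hodd : ∀ v : V, Odd (f (Sum.inl v))) :
    Fintype.card V = G.edgeSet.ncard + 1 ∧ k = 1 :=
  stmt_2_general hf hodd hq
end

section
/- Let G be a finite simple graph with q ≥ 1 edges, exactly q+1 vertices, and no isolated vertices. Then the following three statements are equivalent: (i) G admits a 1-super graceful labeling whose set of edge labels is exactly {1, 2, …, q}; (ii) G is graceful; (iii) G admits a 1-super graceful labeling in which every vertex label is odd. -/
/-!
A super graceful labeling of either kind is an affine image of a graceful labeling `g`: the vertices
receive `a * g v + c` and hence the edges `a * |g u - g v|`. For `(a, c) = (1, q + 1)` the vertex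
labels lie above all edge labels, and for `(a, c) = (2, 1)` the two kinds of labels are separated by
parity. In both cases all `p + q = 2 * q + 1` labels are distinct and lie in `{1, …, 2 * q + 1}`,
so by counting they exhaust it. Conversely, the affine map can be undone on the vertex labels.
-/

theorem range_eq_of_injective_of_ncard_le {α β : Type*} {f : α → β} {s : Set β}
    (hf : Function.Injective f) (hs : s.Finite) (hfs : ∀ x, f x ∈ s)
    (hcard : s.ncard ≤ Nat.card α) :
    Set.range f = s :=
  Set.eq_of_subset_of_ncard_le (Set.range_subset_iff.2 hfs)
    (by rwa [Set.ncard_range_of_injective hf]) hs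

theorem ncard_Icc_nat (a b : ℕ) : (Set.Icc a b).ncard = b + 1 - a := by
  rw [← Finset.coe_Icc, Set.ncard_coe_finset, Nat.card_Icc]

section EdgeDiff

variable {V : Type*}

/-- The edge label `|g u - g v|` that a vertex labeling `g` induces on the pair `s(u, v)`. It is
written as in `IsKSuperGraceful`, where the truncated subtraction never truncates. -/
def edgeDiff (g : V → ℕ) : Sym2 V → ℕ :=
  Sym2.lift ⟨fun u v ↦ max (g u) (g v) - min (g u) (g v), fun u v ↦ by
    simp only [max_comm, min_comm]⟩

theorem edgeDiff_mk (g : V → ℕ) (u v : V) :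
    edgeDiff g s(u, v) = max (g u) (g v) - min (g u) (g v) :=
  rfl

theorem edgeDiff_mul_add (a c : ℕ) (g : V → ℕ) (e : Sym2 V) :
    edgeDiff (fun v ↦ a * g v + c) e = a * edgeDiff g e := by
  induction e with | _ u v
  simp only [edgeDiff_mk]
  rw [max_add_add_right, min_add_add_right, Nat.add_sub_add_right, Nat.mul_max_mul_left,
    Nat.mul_min_mul_left, Nat.mul_sub]

theorem edgeDiff_le {g : V → ℕ} {n : ℕ} (hg : ∀ v, g v ≤ n) (e : Sym2 V) : edgeDiff g e ≤ n := by
  induction e with | _ u v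
  exact (Nat.sub_le _ _).trans (max_le (hg u) (hg v))

theorem edgeDiff_pos {g : V → ℕ} (hg : Function.Injective g) {e : Sym2 V} (he : ¬e.IsDiag) :
    0 < edgeDiff g e := by
  induction e with | _ u v
  exact Nat.sub_pos_of_lt (min_lt_max.2 (hg.ne he))

end EdgeDiff

section Graceful

variable {V : Type*} {G : SimpleGraph V} {g : V → ℕ}

/-- `g` is a graceful labeling of `G`: it is injective with values in `{0, …, q}`, where `q` is the
number of edges, and distinct edges receive distinct induced labels. -/
structure IsGracefulLabeling (G : SimpleGraph V) (g : V → ℕ) : Prop where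
  le_ncard (v : V) : g v ≤ G.edgeSet.ncard
  injective : Function.Injective g
  injOn_edgeDiff : Set.InjOn (edgeDiff g) G.edgeSet

theorem injOn_edgeDiff_iff :
    Set.InjOn (edgeDiff g) G.edgeSet ↔
      ∀ u v x y : V, G.Adj u v → G.Adj x y →
        max (g u) (g v) - min (g u) (g v) = max (g x) (g y) - min (g x) (g y) →
        s(u, v) = s(x, y) := by
  refine ⟨fun h u v x y huv hxy heq ↦ h huv hxy heq, fun h e he e' he' heq ↦ ?_⟩
  induction e with | _ u v
  induction e' with | _ x y
  exact h u v x y he he' heq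

theorem isGracefulLabeling_iff :
    IsGracefulLabeling G g ↔
      (∀ v : V, g v ≤ G.edgeSet.ncard) ∧ Function.Injective g ∧
        ∀ u v x y : V, G.Adj u v → G.Adj x y →
          max (g u) (g v) - min (g u) (g v) = max (g x) (g y) - min (g x) (g y) →
          s(u, v) = s(x, y) := by
  rw [← injOn_edgeDiff_iff]
  exact ⟨fun h ↦ ⟨h.le_ncard, h.injective, h.injOn_edgeDiff⟩, fun h ↦ ⟨h.1, h.2.1, h.2.2⟩⟩

theorem IsGracefulLabeling.edgeDiff_mem_Icc (hg : IsGracefulLabeling G g) (e : G.edgeSet) :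
    edgeDiff g e ∈ Set.Icc 1 G.edgeSet.ncard :=
  ⟨edgeDiff_pos hg.injective (G.not_isDiag_of_mem_edgeSet e.2), edgeDiff_le hg.le_ncard e⟩

theorem IsGracefulLabeling.range_edgeDiff [Finite V] (hg : IsGracefulLabeling G g) :
    Set.range (fun e : G.edgeSet ↦ edgeDiff g e) = Set.Icc 1 G.edgeSet.ncard := by
  refine range_eq_of_injective_of_ncard_le hg.injOn_edgeDiff.injective (Set.finite_Icc _ _)
    hg.edgeDiff_mem_Icc ?_
  rw [ncard_Icc_nat, Nat.card_coe_set_eq, Nat.add_sub_cancel]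

/-- The labeling of vertices and edges induced by the vertex labels `a * g v + c`; its edge labels
are the absolute differences by `edgeDiff_mul_add`. -/
def affineLabeling (G : SimpleGraph V) (g : V → ℕ) (a c : ℕ) : V ⊕ G.edgeSet → ℕ :=
  Sum.elim (fun v ↦ a * g v + c) (fun e ↦ a * edgeDiff g e)

theorem IsGracefulLabeling.affineLabeling_injective {a c : ℕ} (hg : IsGracefulLabeling G g)
    (ha : 0 < a) (hdisj : ∀ v, ∀ e : G.edgeSet, a * g v + c ≠ a * edgeDiff g e) :
    Function.Injective (affineLabeling G g a c) := by
  have hmul : Function.Injective (a * ·) := fun _ _ ↦ Nat.eq_of_mul_eq_mul_left ha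
  exact ((add_left_injective c).comp (hmul.comp hg.injective)).sumElim
    (hmul.comp hg.injOn_edgeDiff.injective) hdisj

theorem IsGracefulLabeling.affineLabeling_mem_Icc {a c n : ℕ} (hg : IsGracefulLabeling G g)
    (ha : 0 < a) (hc : 0 < c) (hn : a * G.edgeSet.ncard + c ≤ n) (x : V ⊕ G.edgeSet) :
    affineLabeling G g a c x ∈ Set.Icc 1 n := by
  rcases x with v | e
  · exact ⟨hc.trans_le (Nat.le_add_left _ _),
      (Nat.add_le_add_right (Nat.mul_le_mul_left a (hg.le_ncard v)) c).trans hn⟩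
  · obtain ⟨hpos, hle⟩ := hg.edgeDiff_mem_Icc e
    exact ⟨Nat.mul_pos ha hpos,
      (Nat.mul_le_mul_left a hle).trans ((Nat.le_add_right _ c).trans hn)⟩

end Graceful

section SuperGraceful

variable {V : Type} [Fintype V] {G : SimpleGraph V} {g : V → ℕ} {f : V ⊕ G.edgeSet → ℕ}
  {k a c : ℕ}

theorem IsKSuperGraceful.apply_inr (hf : IsKSuperGraceful G k f) (e : G.edgeSet) :
    f (Sum.inr e) = edgeDiff (f ∘ Sum.inl) e := by
  obtain ⟨e, he⟩ := e
  induction e with | _ u v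
  exact hf.2.2 u v he

theorem IsKSuperGraceful.apply_mem_Icc_s3 (hf : IsKSuperGraceful G k f) (x : V ⊕ G.edgeSet) :
    f x ∈ Set.Icc k (k + Fintype.card V + G.edgeSet.ncard - 1) :=
  hf.2.1 ▸ Set.mem_range_self x

theorem IsKSuperGraceful.isGracefulLabeling_of_affine (hf : IsKSuperGraceful G k f)
    (hfg : ∀ v, f (Sum.inl v) = a * g v + c) (hle : ∀ v, g v ≤ G.edgeSet.ncard) :
    IsGracefulLabeling G g where
  le_ncard := hle
  injective u v huv := Sum.inl_injective (hf.1 (by rw [hfg, hfg, huv]))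
  injOn_edgeDiff := by
    have hedge (e : G.edgeSet) : f (Sum.inr e) = a * edgeDiff g e := by
      rw [hf.apply_inr, ← edgeDiff_mul_add a c, ← funext hfg, Function.comp_def]
    intro e he e' he' heq
    have hsub : (⟨e, he⟩ : G.edgeSet) = ⟨e', he'⟩ :=
      Sum.inr_injective (hf.1 (by rw [hedge, hedge, heq]))
    exact congrArg Subtype.val hsub

theorem IsKSuperGraceful.exists_isGracefulLabeling_of_range_edges (hf : IsKSuperGraceful G 1 f)
    (hp : Fintype.card V ≤ G.edgeSet.ncard + 1)
    (hE : Set.range (fun e ↦ f (Sum.inr e)) = Set.Icc 1 G.edgeSet.ncard) :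
    ∃ g, IsGracefulLabeling G g := by
  have hlower (v : V) : G.edgeSet.ncard < f (Sum.inl v) := by
    by_contra! hle
    obtain ⟨e, he⟩ := hE.ge ⟨(hf.apply_mem_Icc_s3 (Sum.inl v)).1, hle⟩
    exact Sum.inr_ne_inl (hf.1 he)
  refine ⟨fun v ↦ f (Sum.inl v) - (G.edgeSet.ncard + 1),
    hf.isGracefulLabeling_of_affine (a := 1) (c := G.edgeSet.ncard + 1) (fun v ↦ ?_) fun v ↦ ?_⟩
  · have := hlower v
    omega
  · have := (hf.apply_mem_Icc_s3 (Sum.inl v)).2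
    omega

theorem IsKSuperGraceful.exists_isGracefulLabeling_of_odd (hf : IsKSuperGraceful G 1 f)
    (hp : Fintype.card V ≤ G.edgeSet.ncard + 1) (hodd : ∀ v, Odd (f (Sum.inl v))) :
    ∃ g, IsGracefulLabeling G g := by
  choose g hg using hodd
  refine ⟨g, hf.isGracefulLabeling_of_affine hg fun v ↦ ?_⟩
  have := (hf.apply_mem_Icc_s3 (Sum.inl v)).2
  have := hg v
  omega

theorem IsGracefulLabeling.isKSuperGraceful_affineLabeling (hg : IsGracefulLabeling G g)
    (hp : Fintype.card V = G.edgeSet.ncard + 1) (ha : 0 < a) (hc : 0 < c)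
    (hac : a * G.edgeSet.ncard + c ≤ 2 * G.edgeSet.ncard + 1)
    (hdisj : ∀ v, ∀ e : G.edgeSet, a * g v + c ≠ a * edgeDiff g e) :
    IsKSuperGraceful G 1 (affineLabeling G g a c) := by
  have hinj := hg.affineLabeling_injective ha hdisj
  refine ⟨hinj, ?_, fun u v _ ↦ (edgeDiff_mul_add a c g s(u, v)).symm⟩
  refine range_eq_of_injective_of_ncard_le hinj (Set.finite_Icc _ _)
    (hg.affineLabeling_mem_Icc ha hc (by omega)) ?_
  rw [ncard_Icc_nat, Nat.card_sum, Nat.card_eq_fintype_card, Nat.card_coe_set_eq]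
  omega

theorem IsGracefulLabeling.isKSuperGraceful_affineLabeling_one (hg : IsGracefulLabeling G g)
    (hp : Fintype.card V = G.edgeSet.ncard + 1) :
    IsKSuperGraceful G 1 (affineLabeling G g 1 (G.edgeSet.ncard + 1)) := by
  refine hg.isKSuperGraceful_affineLabeling hp one_pos (Nat.succ_pos _) (by omega) fun v e ↦ ?_
  have := (hg.edgeDiff_mem_Icc e).2
  omega

theorem IsGracefulLabeling.isKSuperGraceful_affineLabeling_two (hg : IsGracefulLabeling G g)
    (hp : Fintype.card V = G.edgeSet.ncard + 1) :
    IsKSuperGraceful G 1 (affineLabeling G g 2 1) :=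
  hg.isKSuperGraceful_affineLabeling hp two_pos one_pos le_rfl fun v e ↦ by omega

end SuperGraceful

theorem stmt_3_general {V : Type} [Fintype V] (G : SimpleGraph V)
    (hp : Fintype.card V = G.edgeSet.ncard + 1) :
    List.TFAE [
      ∃ f : V ⊕ G.edgeSet → ℕ, IsKSuperGraceful G 1 f ∧
        Set.range (fun e : G.edgeSet ↦ f (Sum.inr e)) = Set.Icc 1 G.edgeSet.ncard,
      ∃ g : V → ℕ, IsGracefulLabeling G g,
      ∃ f : V ⊕ G.edgeSet → ℕ, IsKSuperGraceful G 1 f ∧ ∀ v : V, Odd (f (Sum.inl v))] := by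
  tfae_have 1 → 2 := fun ⟨_, hf, hE⟩ ↦ hf.exists_isGracefulLabeling_of_range_edges hp.le hE
  tfae_have 2 → 1 := fun ⟨_, hg⟩ ↦ ⟨_, hg.isKSuperGraceful_affineLabeling_one hp, by
    simpa only [affineLabeling, Sum.elim_inr, one_mul] using hg.range_edgeDiff⟩
  tfae_have 2 → 3 := fun ⟨g, hg⟩ ↦
    ⟨_, hg.isKSuperGraceful_affineLabeling_two hp, fun v ↦ ⟨g v, rfl⟩⟩
  tfae_have 3 → 2 := fun ⟨_, hf, hodd⟩ ↦ hf.exists_isGracefulLabeling_of_odd hp.le hodd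
  tfae_finish

/-- For a `(q+1, q)`-graph `G` the following are equivalent:
(i) `G` has a super graceful labeling with edge-label set `{1, …, q}`;
(ii) `G` is graceful;
(iii) `G` has a super graceful labeling with all vertex labels odd. -/
theorem stmt_3 {V : Type} [Fintype V] (G : SimpleGraph V)
    (hq : 1 ≤ G.edgeSet.ncard) (hp : Fintype.card V = G.edgeSet.ncard + 1)
    (hiso : ∀ v : V, ∃ u : V, G.Adj v u) :
    ((∃ f : V ⊕ G.edgeSet → ℕ, IsKSuperGraceful G 1 f ∧
        Set.range (fun e : G.edgeSet => f (Sum.inr e)) = Set.Icc 1 G.edgeSet.ncard) ↔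
      (∃ g : V → ℕ, (∀ v : V, g v ≤ G.edgeSet.ncard) ∧ Function.Injective g ∧
        ∀ (u v x y : V), G.Adj u v → G.Adj x y →
          max (g u) (g v) - min (g u) (g v) = max (g x) (g y) - min (g x) (g y) →
          s(u, v) = s(x, y))) ∧
    ((∃ g : V → ℕ, (∀ v : V, g v ≤ G.edgeSet.ncard) ∧ Function.Injective g ∧
        ∀ (u v x y : V), G.Adj u v → G.Adj x y →
          max (g u) (g v) - min (g u) (g v) = max (g x) (g y) - min (g x) (g y) →
          s(u, v) = s(x, y)) ↔
      (∃ f : V ⊕ G.edgeSet → ℕ, IsKSuperGraceful G 1 f ∧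
        ∀ v : V, Odd (f (Sum.inl v)))) := by
  simp only [← isGracefulLabeling_iff]
  exact ⟨(stmt_3_general G hp).out 0 1, (stmt_3_general G hp).out 1 2⟩
end

section
/- Let n, k ≥ 1. If a k-Skolem sequence of length n exists, then: if k is even, n ≡ 0 or 3 (mod 4); and if k is odd, n ≡ 0 or 1 (mod 4). -/
/-- `(a i, b i)`, `i = 0, …, n-1`, is a `k`-Skolem sequence of length `n`:
`a i - b i = k + i` (i.e. `aᵢ - bᵢ = k + i - 1` for `1 ≤ i ≤ n` in 1-indexed form)
and the `2n` values `a i, b i` are mutually distinct elements of `{1, …, 2n}`. -/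
def IsSkolemSeq (k n : ℕ) (a b : Fin n → ℕ) : Prop :=
  Function.Injective (Sum.elim a b) ∧
  (∀ i : Fin n, a i ∈ Finset.Icc 1 (2 * n)) ∧
  (∀ i : Fin n, b i ∈ Finset.Icc 1 (2 * n)) ∧
  ∀ i : Fin n, a i = b i + (k + (i : ℕ))

/-!
The `aᵢ` and `bᵢ` exhaust `{1, …, 2n}`, whose sum `n (2n + 1)` has the parity of `n`. This sum is
also `2 ∑ bᵢ + ∑ (aᵢ - bᵢ)`, so it has the parity of the sum of the differences, which is
`nk + n.choose 2`. Hence `nk + n.choose 2` has the parity of `n`: for odd `k` this says that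
`n.choose 2` is even, and for even `k` that `n.choose 2` has the parity of `n`. Since
`n.choose 2` is even exactly when `n ≡ 0, 1 (mod 4)`, both cases can be read off.
-/

open Finset Function

theorem even_choose_two_iff (n : ℕ) : Even (n.choose 2) ↔ n % 4 = 0 ∨ n % 4 = 1 := by
  induction n with
  | zero => simp
  | succ n ih =>
    rw [Nat.choose_succ_succ' n 1, Nat.choose_one_right, Nat.even_add, ih, Nat.even_iff]
    omega

theorem even_sum_Icc_one_two_mul_iff (n : ℕ) : Even (∑ x ∈ Icc 1 (2 * n), x) ↔ Even n := by
  have sum_eq_choose : ∑ x ∈ Icc 1 (2 * n), x = (2 * n + 1).choose 2 := by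
    simpa only [Nat.choose_one_right] using Nat.sum_Icc_choose (2 * n) 1
  rw [sum_eq_choose, even_choose_two_iff, Nat.even_iff]
  omega

theorem sum_fin_const_add (n k : ℕ) : ∑ i : Fin n, (k + (i : ℕ)) = n * k + n.choose 2 := by
  rw [sum_add_distrib, Fin.sum_univ_eq_sum_range (fun i ↦ i) n, sum_range_id,
    ← Nat.choose_two_right, Fin.sum_const, smul_eq_mul]

section Pairing

variable {ι M : Type*} [Fintype ι] {s : Finset M} {a b d : ι → M}

theorem sum_add_sum_eq_sum_of_injective [AddCommMonoid M] (hinj : Injective (Sum.elim a b))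
    (ha : ∀ i, a i ∈ s) (hb : ∀ i, b i ∈ s) (hcard : #s ≤ 2 * Fintype.card ι) :
    ∑ i, a i + ∑ i, b i = ∑ x ∈ s, x := by
  have hmaps : Set.MapsTo (Sum.elim a b) (univ : Finset (ι ⊕ ι)) s :=
    fun i _ ↦ Sum.rec ha hb i
  have hsurj : Set.SurjOn (Sum.elim a b) (univ : Finset (ι ⊕ ι)) s := by
    refine surjOn_of_injOn_of_card_le _ hmaps hinj.injOn ?_
    rwa [card_univ, Fintype.card_sum, ← two_mul]
  calc ∑ i, a i + ∑ i, b i = ∑ i, Sum.elim a b i := (Fintype.sum_sumElim a b).symm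
    _ = ∑ x ∈ s, x := sum_nbij _ hmaps hinj.injOn hsurj fun _ _ ↦ rfl

theorem sum_eq_two_nsmul_sum_add_sum_of_injective [AddCommMonoid M]
    (hinj : Injective (Sum.elim a b)) (ha : ∀ i, a i ∈ s) (hb : ∀ i, b i ∈ s)
    (hcard : #s ≤ 2 * Fintype.card ι) (hab : ∀ i, a i = b i + d i) :
    ∑ x ∈ s, x = 2 • ∑ i, b i + ∑ i, d i := by
  have hsum : ∑ i, a i = ∑ i, b i + ∑ i, d i := by
    rw [← sum_add_distrib, sum_congr rfl fun i _ ↦ hab i]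
  rw [← sum_add_sum_eq_sum_of_injective hinj ha hb hcard, hsum, add_right_comm, two_nsmul]

end Pairing

theorem IsSkolemSeq.even_mul_add_choose_two_iff {k n : ℕ} {a b : Fin n → ℕ}
    (h : IsSkolemSeq k n a b) : Even (n * k + n.choose 2) ↔ Even n := by
  obtain ⟨hinj, ha, hb, hab⟩ := h
  have hcard : #(Icc 1 (2 * n)) ≤ 2 * Fintype.card (Fin n) := by simp
  have hsum := sum_eq_two_nsmul_sum_add_sum_of_injective hinj ha hb hcard hab
  rw [sum_fin_const_add, smul_eq_mul] at hsum
  rw [← even_sum_Icc_one_two_mul_iff n, hsum, Nat.even_add (m := 2 * _)]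
  simp only [even_two_mul, true_iff]

/-- A `k`-Skolem sequence of length `n` exists only if `n ≡ 0, 3 (mod 4)` when `k`
is even, and `n ≡ 0, 1 (mod 4)` when `k` is odd. -/
theorem stmt_9 (n k : ℕ) (hn : 1 ≤ n) (hk : 1 ≤ k)
    (h : ∃ a b : Fin n → ℕ, IsSkolemSeq k n a b) :
    (Even k → n % 4 = 0 ∨ n % 4 = 3) ∧ (Odd k → n % 4 = 0 ∨ n % 4 = 1) := by
  obtain ⟨a, b, hab⟩ := h
  have hparity := hab.even_mul_add_choose_two_iff
  rw [Nat.even_add, Nat.even_mul, even_choose_two_iff] at hparity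
  refine ⟨fun hk_even ↦ ?_, fun hk_odd ↦ ?_⟩
  · have hmod : (n % 4 = 0 ∨ n % 4 = 1) ↔ Even n := by
      simpa only [hk_even, or_true, true_iff] using hparity
    rw [Nat.even_iff] at hmod
    omega
  · have hmod : (Even n ↔ n % 4 = 0 ∨ n % 4 = 1) ↔ Even n := by
      simpa only [Nat.not_even_iff_odd.mpr hk_odd, or_false] using hparity
    tauto
end

section
/- For every integer k ≥ 1, there exists a k-Skolem sequence of length 2k − 1. -/
/-!
The differences `k, …, 3k - 2` of a `k`-Skolem sequence of length `n = 2k - 1` sum to `n ^ 2`, the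
largest total that a pairing of `{1, …, 2n}` can have. This forces every `bᵢ` into the lower half
`{1, …, n}` and every `aᵢ` into the upper half `{n + 1, …, 2n}`. Two nested families of intervals
achieve it: in each of them, as the difference grows by `1`, the left endpoint drops by `2` and
hence the right endpoint by `1`. The differences below `2k - 1` start at the even numbers of the
lower half and end in `{2k, …, 3k - 2}`; the others start at the odd numbers and end in
`{3k - 1, …, 4k - 2}`.
-/

theorem IsSkolemSeq.of_injective_of_lt {k n : ℕ} {a b : Fin n → ℕ}
    (ha : Function.Injective a) (hb : Function.Injective b) (hlt : ∀ i j, b i < a j)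
    (hb_pos : ∀ i, 1 ≤ b i) (ha_le : ∀ i, a i ≤ 2 * n) (hab : ∀ i, a i = b i + (k + (i : ℕ))) :
    IsSkolemSeq k n a b := by
  refine ⟨ha.sumElim hb fun i j => (hlt j i).ne', fun i => ?_, fun i => ?_, hab⟩
  · exact Finset.mem_Icc.mpr ⟨(hb_pos i).trans (hlt i i).le, ha_le i⟩
  · exact Finset.mem_Icc.mpr ⟨hb_pos i, (hlt i i).le.trans (ha_le i)⟩

/-- The smaller element `bᵢ` of the `i`-th pair, counted from `0`, in the `k`-Skolem sequence of
length `2k - 1`. No subtraction truncates, since `i ≤ 2k - 2`. -/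
def skolemLower (k : ℕ) (i : Fin (2 * k - 1)) : ℕ :=
  if (i : ℕ) < k - 1 then 2 * (k - 1 - i) else 4 * k - 3 - 2 * i

/-- The larger element `aᵢ = bᵢ + (k + i)` of the pair with smaller element `skolemLower k i`. -/
def skolemUpper (k : ℕ) (i : Fin (2 * k - 1)) : ℕ :=
  skolemLower k i + (k + i)

section

variable {k : ℕ} {i : Fin (2 * k - 1)}

theorem skolemLower_of_lt (hi : (i : ℕ) < k - 1) : skolemLower k i = 2 * (k - 1 - i) :=
  if_pos hi

theorem skolemLower_of_le (hi : k - 1 ≤ (i : ℕ)) : skolemLower k i = 4 * k - 3 - 2 * i :=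
  if_neg hi.not_gt

theorem skolemUpper_of_lt (hi : (i : ℕ) < k - 1) : skolemUpper k i = 3 * k - 2 - i := by
  rw [skolemUpper, skolemLower_of_lt hi]
  lia

theorem skolemUpper_of_le (hi : k - 1 ≤ (i : ℕ)) : skolemUpper k i = 5 * k - 3 - i := by
  rw [skolemUpper, skolemLower_of_le hi]
  lia

theorem even_skolemLower_iff : Even (skolemLower k i) ↔ (i : ℕ) < k - 1 := by
  rw [Nat.even_iff]
  rcases lt_or_ge (i : ℕ) (k - 1) with hi | hi
  · rw [skolemLower_of_lt hi]
    lia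
  · rw [skolemLower_of_le hi]
    lia

theorem skolemUpper_lt_iff : skolemUpper k i < 3 * k - 1 ↔ (i : ℕ) < k - 1 := by
  rcases lt_or_ge (i : ℕ) (k - 1) with hi | hi
  · rw [skolemUpper_of_lt hi]
    lia
  · rw [skolemUpper_of_le hi]
    lia

variable (k)

theorem skolemLower_mem_Icc (i : Fin (2 * k - 1)) :
    skolemLower k i ∈ Finset.Icc 1 (2 * k - 1) := by
  rw [Finset.mem_Icc]
  rcases lt_or_ge (i : ℕ) (k - 1) with hi | hi
  · rw [skolemLower_of_lt hi]
    lia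
  · rw [skolemLower_of_le hi]
    lia

theorem skolemUpper_mem_Ioc (i : Fin (2 * k - 1)) :
    skolemUpper k i ∈ Finset.Ioc (2 * k - 1) (2 * (2 * k - 1)) := by
  rw [Finset.mem_Ioc]
  rcases lt_or_ge (i : ℕ) (k - 1) with hi | hi
  · rw [skolemUpper_of_lt hi]
    lia
  · rw [skolemUpper_of_le hi]
    lia

theorem skolemLower_injective : Function.Injective (skolemLower k) := by
  intro i j hij
  have same_family : (i : ℕ) < k - 1 ↔ (j : ℕ) < k - 1 := by
    rw [← even_skolemLower_iff, ← even_skolemLower_iff, hij]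
  rcases lt_or_ge (i : ℕ) (k - 1) with hi | hi
  · rw [skolemLower_of_lt hi, skolemLower_of_lt (same_family.mp hi)] at hij
    lia
  · rw [skolemLower_of_le hi, skolemLower_of_le (by lia)] at hij
    lia

theorem skolemUpper_injective : Function.Injective (skolemUpper k) := by
  intro i j hij
  have same_family : (i : ℕ) < k - 1 ↔ (j : ℕ) < k - 1 := by
    rw [← skolemUpper_lt_iff, ← skolemUpper_lt_iff, hij]
  rcases lt_or_ge (i : ℕ) (k - 1) with hi | hi
  · rw [skolemUpper_of_lt hi, skolemUpper_of_lt (same_family.mp hi)] at hij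
    lia
  · rw [skolemUpper_of_le hi, skolemUpper_of_le (by lia)] at hij
    lia

theorem skolemLower_lt_skolemUpper (i j : Fin (2 * k - 1)) :
    skolemLower k i < skolemUpper k j :=
  (Finset.mem_Icc.mp (skolemLower_mem_Icc k i)).2.trans_lt
    (Finset.mem_Ioc.mp (skolemUpper_mem_Ioc k j)).1

end

/-- For every `k ≥ 1`, there exists a `k`-Skolem sequence of length `2k - 1`. -/
theorem stmt_13 (k : ℕ) (hk : 1 ≤ k) :
    ∃ a b : Fin (2 * k - 1) → ℕ, IsSkolemSeq k (2 * k - 1) a b :=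
  ⟨skolemUpper k, skolemLower k, .of_injective_of_lt
    (skolemUpper_injective k) (skolemLower_injective k) (skolemLower_lt_skolemUpper k)
    (fun i => (Finset.mem_Icc.mp (skolemLower_mem_Icc k i)).1)
    (fun i => (Finset.mem_Ioc.mp (skolemUpper_mem_Ioc k i)).2)
    (fun _ => rfl)⟩
end

section
/- Let G be a finite simple graph with q ≥ 1 edges and no isolated vertices, and let k ≥ 1. Then G admits a k-super graceful labeling in which every edge label is an odd integer if and only if k = 1 and G is isomorphic to the star K(1, q) (the complete bipartite graph with parts of sizes 1 and q). -/
/-!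
If all edge labels are odd, every edge joins an even-labelled vertex to an odd-labelled one, and
every even label sits on a vertex. Say there are `a` even and `b` odd vertex labels, so the
labels comprise `a` even and `b + q` odd numbers. Consecutive integers give `b + q ≤ a + 1`, while
`a ≤ q` because the even vertices are independent and not isolated; since `b ≥ 1`, this forces
`b = 1` and `a = q`. So the one odd vertex `c` is joined to everything else, and a vertex
whose label differs from that of `c` by one produces the edge label `1`, whence `k = 1`.
Conversely, give the centre of `K(1, q)` the label `2q + 1` and its leaves `2, 4, …, 2q`.
-/

open Finset SimpleGraph

theorem card_filter_odd_Icc_le (a b : ℕ) :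
    #{n ∈ Icc a b | Odd n} ≤ #{n ∈ Icc a b | Even n} + 1 := by
  have hsucc : #({n ∈ Icc a b | Odd n}.erase b) ≤ #{n ∈ Icc a b | Even n} := by
    refine card_le_card_of_injOn (· + 1) (fun n hn ↦ ?_) (add_left_injective 1).injOn
    simp only [mem_coe, mem_erase, mem_filter, mem_Icc] at hn ⊢
    obtain ⟨hne, ⟨ha, hb⟩, hodd⟩ := hn
    exact ⟨⟨by lia, by lia⟩, hodd.add_one⟩
  have := pred_card_le_card_erase (s := {n ∈ Icc a b | Odd n}) (a := b)
  lia

theorem image_univ_eq_Icc_of_range_eq {α β : Type*} [Fintype α] [Preorder β]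
    [LocallyFiniteOrder β] [DecidableEq β] {f : α → β} {a b : β}
    (hf : Set.range f = Set.Icc a b) : univ.image f = Icc a b := by
  rw [← coe_inj, coe_image, coe_univ, Set.image_univ, coe_Icc, hf]

section Graph

variable {V : Type*} {G : SimpleGraph V}

theorem encard_le_encard_edgeSet_of_isIndepSet {s : Set V} (hs : G.IsIndepSet s)
    (hnb : ∀ v ∈ s, ∃ u, G.Adj v u) : s.encard ≤ G.edgeSet.encard := by
  choose! nb hnb using hnb
  refine Set.encard_le_encard_of_injOn (f := fun v ↦ s(v, nb v)) hnb fun u hu v hv huv ↦ ?_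
  obtain ⟨h, -⟩ | ⟨h, -⟩ := Sym2.eq_iff.1 huv
  · exact h
  · by_contra hne
    exact hs hv hu (Ne.symm hne) (h ▸ hnb v hv)

theorem eq_starGraph_of_isBipartiteWith_singleton {c : V} {t : Set V}
    (h : G.IsBipartiteWith {c} t) (hiso : ∀ v, ∃ u, G.Adj v u) : G = starGraph c := by
  have hend {u v : V} (huv : G.Adj u v) : u = c ∨ v = c :=
    (h.mem_of_adj huv).imp And.left And.right
  have hcenter {v : V} (hv : v ≠ c) : G.Adj v c := by
    obtain ⟨u, hvu⟩ := hiso v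
    exact (hend hvu).resolve_left hv ▸ hvu
  ext u v
  rw [starGraph_adj]
  refine ⟨fun huv ↦ ⟨huv.ne, hend huv⟩, ?_⟩
  rintro ⟨hne, rfl | rfl⟩
  exacts [(hcenter hne.symm).symm, hcenter hne]

theorem ncard_edgeSet_starGraph_add_one [Fintype V] (c : V) :
    (starGraph c).edgeSet.ncard + 1 = Fintype.card V := by
  classical
  rw [← (isTree_starGraph c).card_edgeFinset, ← coe_edgeFinset, Set.ncard_coe_finset]

theorem nonempty_starGraph_iso [Finite V] (c : V) :
    Nonempty (starGraph c ≃g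
      completeBipartiteGraph (Fin 1) (Fin (starGraph c).edgeSet.ncard)) := by
  classical
  have := Fintype.ofFinite V
  let split : completeBipartiteGraph {v // v = c} {v // v ≠ c} ≃g starGraph c :=
    { toEquiv := Equiv.sumCompl (· = c)
      map_rel_iff' := by
        rintro (⟨u, rfl⟩ | ⟨u, hu⟩) (⟨v, hv⟩ | ⟨v, hv⟩) <;>
          grind [starGraph_adj, completeBipartiteGraph_adj, Equiv.sumCompl_apply_inl,
            Equiv.sumCompl_apply_inr] }
  have hleaves : Fintype.card {v // v ≠ c} = (starGraph c).edgeSet.ncard := by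
    rw [Fintype.card_subtype_compl, Fintype.card_subtype_eq]
    exact (Nat.eq_sub_of_add_eq (ncard_edgeSet_starGraph_add_one c)).symm
  exact ⟨split.symm.trans <| completeBipartiteGraphCongr
    (Fintype.equivFinOfCardEq (Fintype.card_subtype_eq c)) (Fintype.equivFinOfCardEq hleaves)⟩

end Graph

namespace IsKSuperGraceful

variable {V : Type} [Fintype V] {G : SimpleGraph V} {k : ℕ}

section Labeling

variable {f : V ⊕ G.edgeSet → ℕ} (hf : IsKSuperGraceful G k f)
include hf

theorem card_filter_inl_add_card_filter_inr [Fintype G.edgeSet] (P : ℕ → Prop)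
    [DecidablePred P] : #{v | P (f (.inl v))} + #{e | P (f (.inr e))} =
      #{n ∈ Icc k (k + Fintype.card V + G.edgeSet.ncard - 1) | P n} := by
  classical
  rw [← image_univ_eq_Icc_of_range_eq hf.2.1, filter_image, card_image_of_injective _ hf.1]
  simp only [card_filter, Fintype.sum_sum_type]

variable (hodd : ∀ e : G.edgeSet, Odd (f (.inr e)))
include hodd

theorem isBipartiteWith_odd_even :
    G.IsBipartiteWith {v | Odd (f (.inl v))} {v | Even (f (.inl v))} where
  disjoint := Set.disjoint_left.2 fun _ ho he ↦ Nat.not_even_iff_odd.2 ho he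
  mem_of_adj u v huv := by
    have hedge := hodd ⟨s(u, v), huv⟩
    rw [hf.2.2 u v huv] at hedge
    simp only [Set.mem_ofPred_eq]
    grind

theorem card_filter_even_Icc :
    #{n ∈ Icc k (k + Fintype.card V + G.edgeSet.ncard - 1) | Even n} =
      #{v | Even (f (.inl v))} := by
  classical
  rw [← hf.card_filter_inl_add_card_filter_inr, filter_false_of_mem (s := (univ : Finset G.edgeSet))
    fun e _ ↦ Nat.not_even_iff_odd.2 (hodd e), card_empty, add_zero]

theorem card_filter_odd_Icc :
    #{n ∈ Icc k (k + Fintype.card V + G.edgeSet.ncard - 1) | Odd n} =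
      #{v | Odd (f (.inl v))} + G.edgeSet.ncard := by
  classical
  rw [← hf.card_filter_inl_add_card_filter_inr, filter_true_of_mem fun e _ ↦ hodd e, card_univ,
    Set.ncard_eq_toFinset_card', Set.toFinset_card]

theorem card_even_le_ncard_edgeSet (hiso : ∀ v, ∃ u, G.Adj v u) :
    #{v | Even (f (.inl v))} ≤ G.edgeSet.ncard := by
  have hindep : G.IsIndepSet {v | Even (f (.inl v))} := fun u hu v hv _ huv ↦ by
    have := (hf.isBipartiteWith_odd_even hodd).mem_of_adj huv
    grind
  have hle := encard_le_encard_edgeSet_of_isIndepSet hindep fun v _ ↦ hiso v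
  rwa [← Set.Finite.cast_ncard_eq (Set.toFinite _), ← Set.Finite.cast_ncard_eq (Set.toFinite _),
    Nat.cast_le, Set.ncard_eq_toFinset_card', Set.toFinset_ofPred] at hle

theorem existsUnique_odd (hne : G.edgeSet.Nonempty) (hiso : ∀ v, ∃ u, G.Adj v u) :
    ∃! v, Odd (f (.inl v)) := by
  have hpos : 0 < #{v | Odd (f (.inl v))} := by
    obtain ⟨⟨u, v⟩, huv⟩ := hne
    obtain ⟨hu, -⟩ | ⟨-, hv⟩ := (hf.isBipartiteWith_odd_even hodd).mem_of_adj huv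
    exacts [card_pos.2 ⟨u, by simpa using hu⟩, card_pos.2 ⟨v, by simpa using hv⟩]
  have hone : #{v | Odd (f (.inl v))} = 1 := by
    have hIcc := card_filter_odd_Icc_le k (k + Fintype.card V + G.edgeSet.ncard - 1)
    rw [hf.card_filter_odd_Icc hodd, hf.card_filter_even_Icc hodd] at hIcc
    have := hf.card_even_le_ncard_edgeSet hodd hiso
    lia
  obtain ⟨c, hc⟩ := card_eq_one.1 hone
  have hmem (v : V) : Odd (f (.inl v)) ↔ v = c := by simpa using Finset.ext_iff.1 hc v
  exact ⟨c, (hmem c).2 rfl, fun v hv ↦ (hmem v).1 hv⟩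

theorem exists_eq_starGraph (hne : G.edgeSet.Nonempty) (hiso : ∀ v, ∃ u, G.Adj v u) :
    ∃ c, Odd (f (.inl c)) ∧ G = starGraph c := by
  obtain ⟨c, hc, hunique⟩ := hf.existsUnique_odd hodd hne hiso
  have hsingleton : {v | Odd (f (.inl v))} = {c} := Set.eq_singleton_iff_unique_mem.2 ⟨hc, hunique⟩
  exact ⟨c, hc, eq_starGraph_of_isBipartiteWith_singleton
    (hsingleton ▸ hf.isBipartiteWith_odd_even hodd) hiso⟩

theorem le_one_of_isUniversal [Nontrivial V] {c : V} (huniv : G.IsUniversal c)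
    (hc : Odd (f (.inl c))) : k ≤ 1 := by
  set N := k + Fintype.card V + G.edgeSet.ncard - 1
  have hmem (x) : k ≤ f x ∧ f x ≤ N := Set.mem_Icc.1 (hf.2.1 ▸ Set.mem_range_self x)
  have hkN : k < N := by
    have := Fintype.one_lt_card (α := V)
    lia
  obtain ⟨n, hn, hnc⟩ : ∃ n ∈ Set.Icc k N, n = f (.inl c) + 1 ∨ f (.inl c) = n + 1 := by
    have := hmem (.inl c)
    by_cases hlt : f (.inl c) < N
    · exact ⟨f (.inl c) + 1, ⟨by lia, by lia⟩, .inl rfl⟩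
    · exact ⟨f (.inl c) - 1, ⟨by lia, by lia⟩, .inr (by lia)⟩
  have heven : Even n := by grind
  obtain ⟨v | e, rfl⟩ : n ∈ Set.range f := hf.2.1 ▸ hn
  · have hadj : G.Adj c v := huniv (by rintro rfl; lia)
    have hlabel := hf.2.2 c v hadj
    have := (hmem (.inr ⟨s(c, v), hadj⟩)).1
    lia
  · exact absurd heven (Nat.not_even_iff_odd.2 (hodd e))

end Labeling

theorem comp_iso {W : Type} [Fintype W] {H : SimpleGraph W} {f : W ⊕ H.edgeSet → ℕ}
    (hf : IsKSuperGraceful H k f) (e : G ≃g H) :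
    IsKSuperGraceful G k (f ∘ Sum.map e e.mapEdgeSet) := by
  refine ⟨hf.1.comp (e.injective.sumMap e.mapEdgeSet.injective), ?_,
    fun u v huv ↦ hf.2.2 (e u) (e v) (e.map_adj_iff.2 huv)⟩
  rw [(e.surjective.sumMap e.mapEdgeSet.surjective).range_comp, hf.2.1,
    Fintype.card_congr e.toEquiv, Set.ncard_congr' e.mapEdgeSet]

end IsKSuperGraceful

/-- The labeling of vertices and edges obtained from vertex labels `g` by giving each edge `uv`
the label `|g u - g v|`, written as supremum minus infimum so that it is symmetric in `u`, `v`. -/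
def inducedLabeling {V : Type*} (G : SimpleGraph V) (g : V → ℕ) : V ⊕ G.edgeSet → ℕ :=
  Sum.elim g fun e ↦ (e.1.map g).sup - (e.1.map g).inf

theorem isKSuperGraceful_inducedLabeling {V : Type} [Fintype V] [Nonempty V] {G : SimpleGraph V}
    {k : ℕ} {g : V → ℕ} (hrange : Set.range (inducedLabeling G g) =
      Set.Icc k (k + Fintype.card V + G.edgeSet.ncard - 1)) :
    IsKSuperGraceful G k (inducedLabeling G g) := by
  classical
  refine ⟨?_, hrange, fun u v h ↦ rfl⟩
  rw [← Set.injOn_univ, ← coe_univ, ← card_image_iff, image_univ_eq_Icc_of_range_eq hrange,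
    Nat.card_Icc, card_univ, Fintype.card_sum, Set.ncard_eq_toFinset_card', Set.toFinset_card]
  have := Fintype.card_pos (α := V)
  lia

/-- The labeling of the star `K(1, q)` whose centre is labelled `2q + 1` and whose leaf `i` is
labelled `2(q - i)`, so that the edge to leaf `i` receives the odd label `2i + 1`. -/
def starLabeling (q : ℕ) :
    (Fin 1 ⊕ Fin q) ⊕ (completeBipartiteGraph (Fin 1) (Fin q)).edgeSet → ℕ :=
  inducedLabeling _ (Sum.elim (fun _ ↦ 2 * q + 1) fun i ↦ 2 * (q - i))

theorem starLabeling_inr_mk {q : ℕ} {a : Fin 1} {i : Fin q}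
    (h : s(.inl a, .inr i) ∈ (completeBipartiteGraph (Fin 1) (Fin q)).edgeSet) :
    starLabeling q (.inr ⟨s(.inl a, .inr i), h⟩) = 2 * i + 1 := by
  simp only [starLabeling, inducedLabeling, Sum.elim_inl, Sum.elim_inr, Sym2.map_mk, Sym2.sup_mk,
    Sym2.inf_mk]
  lia

theorem exists_starLabeling_inr_eq {q : ℕ}
    (e : (completeBipartiteGraph (Fin 1) (Fin q)).edgeSet) :
    ∃ i : Fin q, starLabeling q (.inr e) = 2 * i + 1 := by
  obtain ⟨e, he⟩ := e
  obtain ⟨⟨a, i⟩, rfl⟩ := edgeSet_completeBipartiteGraph ▸ he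
  exact ⟨i, starLabeling_inr_mk he⟩

theorem odd_starLabeling_inr {q : ℕ} (e : (completeBipartiteGraph (Fin 1) (Fin q)).edgeSet) :
    Odd (starLabeling q (.inr e)) := by
  obtain ⟨i, hi⟩ := exists_starLabeling_inr_eq e
  exact ⟨i, hi⟩

theorem range_starLabeling (q : ℕ) : Set.range (starLabeling q) = Set.Icc 1 (2 * q + 1) := by
  ext n
  constructor
  · rintro ⟨(c | i) | e, rfl⟩
    · simp [starLabeling, inducedLabeling]
    · simp only [starLabeling, inducedLabeling, Sum.elim_inl, Sum.elim_inr, Set.mem_Icc]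
      lia
    · obtain ⟨i, hi⟩ := exists_starLabeling_inr_eq e
      rw [hi, Set.mem_Icc]
      lia
  · rintro ⟨h1, hn⟩
    obtain ⟨m, rfl | rfl⟩ := n.even_or_odd'
    · refine ⟨.inl (.inr ⟨q - m, by lia⟩), ?_⟩
      simp only [starLabeling, inducedLabeling, Sum.elim_inl, Sum.elim_inr]
      lia
    · obtain rfl | hm := (show m ≤ q by lia).eq_or_lt
      · exact ⟨.inl (.inl 0), rfl⟩
      · exact ⟨.inr ⟨s(.inl 0, .inr ⟨m, hm⟩), by simp⟩, starLabeling_inr_mk _⟩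

theorem isKSuperGraceful_starLabeling (q : ℕ) :
    IsKSuperGraceful (completeBipartiteGraph (Fin 1) (Fin q)) 1 (starLabeling q) := by
  have hncard : (completeBipartiteGraph (Fin 1) (Fin q)).edgeSet.ncard = q := by
    simp [Set.ncard, encard_edgeSet_completeBipartiteGraph]
  refine isKSuperGraceful_inducedLabeling ((range_starLabeling q).trans ?_)
  rw [hncard, Fintype.card_sum, Fintype.card_fin, Fintype.card_fin]
  congr 1
  lia

/-- `G` is `k`-super graceful with all odd edge labels iff `k = 1` and `G` is
isomorphic to the star `K(1, q)`. -/
theorem stmt_17 {V : Type} [Fintype V] (G : SimpleGraph V) (k : ℕ) (hk : 1 ≤ k)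
    (hq : 1 ≤ G.edgeSet.ncard) (hiso : ∀ v : V, ∃ u : V, G.Adj v u) :
    (∃ f : V ⊕ G.edgeSet → ℕ, IsKSuperGraceful G k f ∧
      ∀ e : G.edgeSet, Odd (f (Sum.inr e))) ↔
    (k = 1 ∧
      Nonempty (G ≃g completeBipartiteGraph (Fin 1) (Fin G.edgeSet.ncard))) := by
  constructor
  · rintro ⟨f, hf, hodd⟩
    have hne : G.edgeSet.Nonempty := Set.nonempty_of_ncard_ne_zero (by lia)
    obtain ⟨c, hc, rfl⟩ := hf.exists_eq_starGraph hodd hne hiso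
    have : Nontrivial V := (hiso c).choose_spec.nontrivial
    exact ⟨le_antisymm (hf.le_one_of_isUniversal hodd isUniversal_starGraph_self hc) hk,
      nonempty_starGraph_iso c⟩
  · rintro ⟨rfl, ⟨e⟩⟩
    refine ⟨_, (isKSuperGraceful_starLabeling _).comp_iso e, fun x ↦ ?_⟩
    exact odd_starLabeling_inr (e.mapEdgeSet x)
end

section
/- For every integer n ≥ 2 and every integer k ≥ 1, the complete bipartite graph K(2, n) is k-super graceful if and only if k = 1, k = 2, or k = n. -/
/-! Let `a < b` be the labels of the two vertices on the small side, `X` the set of labels of the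
other side, and `N` the largest label. Each number in `(b, N]` lies in exactly one of `X`, `X - a`,
`X - b`, which determines `X` from the top down: `(N - a, N]` is contained in `X`, the interval
`(N - 2a, N - a]` misses `X`, and so on; above `b` the set `X` is even made of runs of length `a`
with period `3a` if `b = 2a` and with period `2a` if `N < 2b`. Since `a + b`, `2b` and everything
at distance less than `k` from `b` must stay outside `X`, while `b - 1` must be an edge label, each
of the cases `b = 2a`, `N < 2b`, `N = 2b`, `N > 2b` is contradictory as soon as `b + 2a < N`. If
`b + 2a = N`, the labels `b - 1` and `a - 1` force `b = 2a + 1` and `a = k`, whence `N = 4k + 1`.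

Conversely, `K(m, n)` has a labeling for `k = 1` and for `k = m`: the labels of one side are
consecutive, and those of the other side are spaced so that the edges fill the gaps. -/

open Set

theorem injective_and_range_eq_of_subset_range {ι γ : Type*} [Fintype ι] {s : Finset γ} {f : ι → γ}
    (hs : ↑s ⊆ range f) (hcard : Fintype.card ι ≤ s.card) :
    Function.Injective f ∧ range f = s := by
  classical
  have hsub : s ⊆ Finset.univ.image f := by simpa [← Finset.coe_subset] using hs
  have himage : s = Finset.univ.image f :=
    Finset.eq_of_subset_of_card_le hsub (Finset.card_image_le.trans hcard)
  refine ⟨fun u v huv => ?_, by simp [himage]⟩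
  exact Finset.card_image_iff.mp (le_antisymm Finset.card_image_le (himage ▸ hcard))
    (Finset.mem_coe.mpr (Finset.mem_univ u)) (Finset.mem_coe.mpr (Finset.mem_univ v)) huv

theorem exists_add_mul_add_eq {a t N : ℕ} (ha : 0 < a) (ht : t ≤ N) :
    ∃ s r, r < a ∧ t + s * a + r = N :=
  ⟨(N - t) / a, (N - t) % a, Nat.mod_lt _ ha, by rw [add_assoc, Nat.div_add_mod']; omega⟩

theorem mem_iff_dvd_of_forall_mem_iff {X : Set ℕ} {a b q N : ℕ} (hq : q ≠ 0)
    (hX : ∀ m ∈ X, m ≤ N)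
    (hrec : ∀ m, b < m → m ≤ N → (m ∈ X ↔ ∀ i, 0 < i → i < q → m + i * a ∉ X))
    {m s r : ℕ} (hr : r < a) (hm : b < m) (hN : m + s * a + r = N) : m ∈ X ↔ q ∣ s := by
  induction s using Nat.strong_induction_on generalizing m with
  | _ s ih =>
    have hshift {i : ℕ} (hi : 0 < i) (his : i ≤ s) : m + i * a ∈ X ↔ q ∣ s - i := by
      refine ih (s - i) (by omega) (by omega) ?_
      rw [add_assoc m, ← add_mul, Nat.add_sub_cancel' his, hN]
    rw [hrec m hm (by omega)]
    constructor
    · intro hnot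
      by_contra hqs
      have hpos : 0 < s % q := Nat.pos_of_ne_zero (mt Nat.dvd_of_mod_eq_zero hqs)
      exact hnot _ hpos (Nat.mod_lt _ hq.bot_lt)
        ((hshift hpos (Nat.mod_le _ _)).mpr (Nat.dvd_sub_mod s))
    · intro hqs i hi hiq hmem
      have his : i ≤ s := by
        have := hX _ hmem
        by_contra! hsi
        have : (s + 1) * a ≤ i * a := by gcongr; exact hsi
        lia
      exact Nat.not_dvd_of_pos_of_lt hi hiq
        ((Nat.dvd_sub_iff_right his hqs).mp ((hshift hi his).mp hmem))

/-! ### Labelings of complete bipartite graphs -/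

/-- The edges of the complete bipartite graph on `α` and `β` correspond to the pairs in `α × β`. -/
noncomputable def completeBipartiteEdgeEquiv (α β : Type*) :
    α × β ≃ (completeBipartiteGraph α β).edgeSet :=
  Equiv.ofBijective (fun p => ⟨s(Sum.inl p.1, Sum.inr p.2), by simp⟩) <| by
    constructor
    · rintro ⟨i, j⟩ ⟨i', j'⟩ h
      simpa using h
    · rintro ⟨e, he⟩
      induction e using Sym2.ind with
      | _ u v =>
        rcases u with u | u <;> rcases v with v | v
        · simp at he
        · exact ⟨(u, v), rfl⟩
        · exact ⟨(v, u), Subtype.ext Sym2.eq_swap⟩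
        · simp at he

/-- The labels that vertex labels `c` and `x` on the two sides of a complete bipartite graph induce
on its vertices and edges, the latter indexed by pairs of vertices. -/
def bipartiteLabel {α β : Type*} (c : α → ℕ) (x : β → ℕ) : (α ⊕ β) ⊕ α × β → ℕ :=
  Sum.elim (Sum.elim c x) fun p => (c p.1).dist (x p.2)

/-- The vertex labels `c` and `x` on the two sides of a complete bipartite graph, together with the
induced edge labels, use every number in `{k, …, N}` exactly once. -/
structure IsBipartiteLabeling {α β : Type*} (c : α → ℕ) (x : β → ℕ) (k N : ℕ) : Prop where
  injective : Function.Injective (bipartiteLabel c x)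
  range_eq : range (bipartiteLabel c x) = Icc k N

theorem exists_isKSuperGraceful_completeBipartiteGraph_iff {α β : Type} [Fintype α] [Fintype β]
    {k : ℕ} :
    (∃ f, IsKSuperGraceful (completeBipartiteGraph α β) k f) ↔
      ∃ (c : α → ℕ) (x : β → ℕ), IsBipartiteLabeling c x k
        (k + (Fintype.card α + Fintype.card β) + Fintype.card α * Fintype.card β - 1) := by
  have hcard : (completeBipartiteGraph α β).edgeSet.ncard = Fintype.card α * Fintype.card β := by
    simp [Set.ncard, SimpleGraph.encard_edgeSet_completeBipartiteGraph]
  let e : (α ⊕ β) ⊕ α × β ≃ (α ⊕ β) ⊕ (completeBipartiteGraph α β).edgeSet :=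
    (Equiv.refl _).sumCongr (completeBipartiteEdgeEquiv α β)
  simp only [IsKSuperGraceful, Fintype.card_sum, hcard]
  constructor
  · rintro ⟨f, hinj, hrange, hedge⟩
    refine ⟨fun i => f (Sum.inl (Sum.inl i)), fun j => f (Sum.inl (Sum.inr j)), ?_⟩
    have hlabel : bipartiteLabel (fun i => f (Sum.inl (Sum.inl i)))
        (fun j => f (Sum.inl (Sum.inr j))) = f ∘ e := by
      ext ((i | j) | ⟨i, j⟩)
      · rfl
      · rfl
      · exact Nat.dist_eq_max_sub_min.trans (hedge (Sum.inl i) (Sum.inr j) (by simp)).symm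
    constructor
    · rw [hlabel]
      exact hinj.comp e.injective
    · rw [hlabel, e.surjective.range_comp, hrange]
  · rintro ⟨c, x, h⟩
    refine ⟨bipartiteLabel c x ∘ e.symm, h.injective.comp e.symm.injective, ?_, ?_⟩
    · rw [e.symm.surjective.range_comp, h.range_eq]
    · rintro (i | j) (i' | j') hadj
      · simp at hadj
      · have hsymm : e.symm (Sum.inr ⟨s(Sum.inl i, Sum.inr j'), hadj⟩) = Sum.inr (i, j') :=
          e.symm_apply_eq.mpr rfl
        exact (congrArg (bipartiteLabel c x) hsymm).trans Nat.dist_eq_max_sub_min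
      · have hsymm : e.symm (Sum.inr ⟨s(Sum.inr j, Sum.inl i'), hadj⟩) = Sum.inr (i', j) :=
          e.symm_apply_eq.mpr (congrArg Sum.inr (Subtype.ext Sym2.eq_swap))
        exact (congrArg (bipartiteLabel c x) hsymm).trans
          ((Nat.dist_comm _ _).trans Nat.dist_eq_max_sub_min)
      · simp at hadj

namespace IsBipartiteLabeling

section General

variable {α β : Type*} {c : α → ℕ} {x : β → ℕ} {k N m : ℕ}

theorem of_Icc_subset_range [Fintype α] [Fintype β]
    (hcard : Fintype.card α + Fintype.card β + Fintype.card α * Fintype.card β ≤ N + 1 - k)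
    (h : Icc k N ⊆ range (bipartiteLabel c x)) : IsBipartiteLabeling c x k N := by
  rw [← Finset.coe_Icc] at h
  obtain ⟨hinj, hrange⟩ := injective_and_range_eq_of_subset_range h (by simpa using hcard)
  exact ⟨hinj, by rw [hrange, Finset.coe_Icc]⟩

theorem symm (h : IsBipartiteLabeling c x k N) : IsBipartiteLabeling x c k N := by
  let e := (Equiv.sumComm β α).sumCongr (Equiv.prodComm β α)
  have hlabel : bipartiteLabel x c = bipartiteLabel c x ∘ e := by
    ext ((j | i) | ⟨j, i⟩)
    · rfl
    · rfl
    · exact Nat.dist_comm _ _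
  constructor
  · rw [hlabel]
    exact h.injective.comp e.injective
  · rw [hlabel, e.surjective.range_comp, h.range_eq]

theorem comp_left (h : IsBipartiteLabeling c x k N) (σ : Equiv.Perm α) :
    IsBipartiteLabeling (c ∘ σ) x k N := by
  let e := (σ.sumCongr (Equiv.refl β)).sumCongr (σ.prodCongr (Equiv.refl β))
  have hlabel : bipartiteLabel (c ∘ σ) x = bipartiteLabel c x ∘ e := by
    ext ((i | j) | ⟨i, j⟩) <;> rfl
  constructor
  · rw [hlabel]
    exact h.injective.comp e.injective
  · rw [hlabel, e.surjective.range_comp, h.range_eq]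

theorem left_mem_Icc (h : IsBipartiteLabeling c x k N) (i : α) : c i ∈ Icc k N :=
  h.range_eq ▸ mem_range_self (f := bipartiteLabel c x) (Sum.inl (Sum.inl i))

theorem right_mem_Icc (h : IsBipartiteLabeling c x k N) (hm : m ∈ range x) : m ∈ Icc k N := by
  obtain ⟨j, rfl⟩ := hm
  exact h.range_eq ▸ mem_range_self (f := bipartiteLabel c x) (Sum.inl (Sum.inr j))

theorem dist_mem_Icc (h : IsBipartiteLabeling c x k N) (i : α) (hm : m ∈ range x) :
    (c i).dist m ∈ Icc k N := by
  obtain ⟨j, rfl⟩ := hm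
  exact h.range_eq ▸ mem_range_self (f := bipartiteLabel c x) (Sum.inr (i, j))

theorem left_injective (h : IsBipartiteLabeling c x k N) : Function.Injective c :=
  h.injective.comp (Sum.inl_injective.comp Sum.inl_injective)

theorem left_ne_right (h : IsBipartiteLabeling c x k N) (i : α) (j : β) : c i ≠ x j :=
  h.injective.ne (a₁ := Sum.inl (Sum.inl i)) (a₂ := Sum.inl (Sum.inr j)) (by simp)

theorem notMem_of_lt (h : IsBipartiteLabeling c x k N) (hm : m < k) : m ∉ range x :=
  fun hmem => hm.not_ge (h.right_mem_Icc hmem).1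

theorem notMem_of_gt (h : IsBipartiteLabeling c x k N) (hm : N < m) : m ∉ range x :=
  fun hmem => hm.not_ge (h.right_mem_Icc hmem).2

theorem notMem_of_dist_lt (h : IsBipartiteLabeling c x k N) (i : α) (hm : (c i).dist m < k) :
    m ∉ range x :=
  fun hmem => hm.not_ge (h.dist_mem_Icc i hmem).1

theorem add_left_notMem (h : IsBipartiteLabeling c x k N) (i : α) (hm : m ∈ range x) :
    m + c i ∉ range x := by
  obtain ⟨j, rfl⟩ := hm
  rintro ⟨l, hl⟩
  refine h.injective.ne (a₁ := Sum.inl (Sum.inr j)) (a₂ := Sum.inr (i, l)) (by simp) ?_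
  change x j = (c i).dist (x l)
  simp only [Nat.dist, hl]
  omega

theorem left_add_left_notMem (h : IsBipartiteLabeling c x k N) (i i' : α) :
    c i + c i' ∉ range x := by
  rintro ⟨l, hl⟩
  refine h.injective.ne (a₁ := Sum.inl (Sum.inl i')) (a₂ := Sum.inr (i, l)) (by simp) ?_
  change c i' = (c i).dist (x l)
  simp only [Nat.dist, hl]
  omega

theorem eq_of_add_left_mem (h : IsBipartiteLabeling c x k N) {i i' : α}
    (hi : m + c i ∈ range x) (hi' : m + c i' ∈ range x) : i = i' := by
  obtain ⟨j, hj⟩ := hi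
  obtain ⟨j', hj'⟩ := hi'
  have hedge : (c i).dist (x j) = (c i').dist (x j') := by
    simp only [Nat.dist, hj, hj']
    omega
  have := h.injective (a₁ := Sum.inr (i, j)) (a₂ := Sum.inr (i', j')) hedge
  simp_all

theorem add_ne_two_mul_left (h : IsBipartiteLabeling c x k N) (i : α) {y z : ℕ}
    (hy : y ∈ range x) (hz : z ∈ range x) : y + z ≠ 2 * c i := by
  obtain ⟨j, rfl⟩ := hy
  obtain ⟨l, rfl⟩ := hz
  intro hsum
  have hedge : (c i).dist (x j) = (c i).dist (x l) := by
    simp only [Nat.dist]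
    omega
  have hjl : j = l := by
    simpa using h.injective (a₁ := Sum.inr (i, j)) (a₂ := Sum.inr (i, l)) hedge
  subst hjl
  exact h.left_ne_right i j (by omega)

theorem eq_or_mem_of_mem_Icc (h : IsBipartiteLabeling c x k N) (hm : m ∈ Icc k N) :
    (∃ i, c i = m) ∨ m ∈ range x ∨ ∃ i, m + c i ∈ range x ∨ ∃ y ∈ range x, y + m = c i := by
  rw [← h.range_eq] at hm
  obtain ⟨(i | j) | ⟨i, j⟩, hm⟩ := hm
  · exact .inl ⟨i, hm⟩
  · exact .inr (.inl ⟨j, hm⟩)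
  · change (c i).dist (x j) = m at hm
    simp only [Nat.dist] at hm
    refine .inr (.inr ⟨i, ?_⟩)
    rcases le_total (c i) (x j) with hle | hle
    · exact .inl ⟨j, by omega⟩
    · exact .inr ⟨x j, mem_range_self j, by omega⟩

end General

/-! ### Two vertices on one side -/

section TwoLeft

variable {β : Type*} {c : Fin 2 → ℕ} {x : β → ℕ} {k N m : ℕ}

theorem mem_or_add_mem_of_snd_lt (h : IsBipartiteLabeling c x k N) (hlt : c 0 < c 1) (hm : c 1 < m)
    (hmN : m ≤ N) : m ∈ range x ∨ m + c 0 ∈ range x ∨ m + c 1 ∈ range x := by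
  have hk1 := (h.left_mem_Icc 1).1
  have hcover := h.eq_or_mem_of_mem_Icc (m := m) ⟨by omega, hmN⟩
  simp only [Fin.exists_fin_two] at hcover
  rcases hcover with (_ | _) | hmem | (hmem | ⟨y, _, _⟩) | (hmem | ⟨y, _, _⟩)
  all_goals first | omega | tauto

theorem snd_lt [Nonempty β] (h : IsBipartiteLabeling c x k N) (hk : 3 ≤ k) (hlt : c 0 < c 1) :
    c 1 < N := by
  obtain ⟨j⟩ := ‹Nonempty β›
  obtain ⟨hkj, hjN⟩ := h.right_mem_Icc (mem_range_self j)
  have hj0 := h.left_ne_right 0 j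
  have hj1 := h.left_ne_right 1 j
  have hk0 := (h.left_mem_Icc 0).1
  refine lt_of_le_of_ne (h.left_mem_Icc 1).2 fun hN => ?_
  have hlabels : ∀ m, N < m + 3 → m < N → m = c 0 := by
    intro m hm hmN
    have hcover := h.eq_or_mem_of_mem_Icc (m := m) ⟨by omega, hmN.le⟩
    simp only [Fin.exists_fin_two] at hcover
    rcases hcover with (h0 | h1) | hmem | (hmem | ⟨y, hy, _⟩) | (hmem | ⟨y, hy, _⟩)
    · exact h0.symm
    · omega
    · exact absurd hmem (h.notMem_of_dist_lt 1 (by simp only [Nat.dist]; omega))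
    · exact absurd hmem (h.notMem_of_gt (by omega))
    · exact absurd hy (h.notMem_of_lt (by omega))
    · exact absurd hmem (h.notMem_of_gt (by omega))
    · exact absurd hy (h.notMem_of_lt (by omega))
  have h1 := hlabels (N - 1) (by omega) (by omega)
  have h2 := hlabels (N - 2) (by omega) (by omega)
  omega

theorem fst_add_snd_lt [Nonempty β] (h : IsBipartiteLabeling c x k N) (hk : 3 ≤ k)
    (hlt : c 0 < c 1) : c 0 + c 1 < N := by
  by_contra! hN
  rcases h.mem_or_add_mem_of_snd_lt hlt (lt_add_one _) (h.snd_lt hk hlt) with hmem | hmem | hmem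
  · exact h.notMem_of_dist_lt 1 (by simp only [Nat.dist]; omega) hmem
  · exact h.notMem_of_gt (by omega) hmem
  · exact h.notMem_of_gt (by omega) hmem

theorem mem_of_lt_add_fst [Nonempty β] (h : IsBipartiteLabeling c x k N) (hk : 3 ≤ k)
    (hlt : c 0 < c 1) (hm : N < m + c 0) (hmN : m ≤ N) : m ∈ range x := by
  have hsum := h.fst_add_snd_lt hk hlt
  rcases h.mem_or_add_mem_of_snd_lt hlt (by omega) hmN with hmem | hmem | hmem
  · exact hmem
  · exact absurd hmem (h.notMem_of_gt hm)
  · exact absurd hmem (h.notMem_of_gt (by omega))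

theorem notMem_of_lt_add_two_mul_fst [Nonempty β] (h : IsBipartiteLabeling c x k N) (hk : 3 ≤ k)
    (hlt : c 0 < c 1) (hm : N < m + 2 * c 0) (hmN : m + c 0 ≤ N) : m ∉ range x :=
  fun hmem => h.add_left_notMem 0 hmem (h.mem_of_lt_add_fst hk hlt (by omega) hmN)

theorem snd_add_two_mul_fst_le [Nonempty β] (h : IsBipartiteLabeling c x k N) (hk : 3 ≤ k)
    (hlt : c 0 < c 1) : c 1 + 2 * c 0 ≤ N := by
  have hsum := h.fst_add_snd_lt hk hlt
  by_contra! hN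
  exact h.left_add_left_notMem 0 1 (h.mem_of_lt_add_fst hk hlt (by omega) (by omega))

theorem two_mul_fst_le_snd [Nonempty β] (h : IsBipartiteLabeling c x k N) (hk : 3 ≤ k)
    (hlt : c 0 < c 1) : 2 * c 0 ≤ c 1 := by
  have hle := h.snd_add_two_mul_fst_le hk hlt
  by_contra! hN
  refine zero_ne_one (h.eq_of_add_left_mem (m := N - c 1) (i := (0 : Fin 2)) (i' := 1) ?_ ?_)
  all_goals exact h.mem_of_lt_add_fst hk hlt (by omega) (by omega)

theorem snd_pred_add_mem [Nonempty β] (h : IsBipartiteLabeling c x k N) (hk : 3 ≤ k)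
    (hlt : c 0 < c 1) : c 1 - 1 + c 0 ∈ range x ∨ c 1 - 1 + c 1 ∈ range x := by
  have hle := h.two_mul_fst_le_snd hk hlt
  have hk0 := (h.left_mem_Icc 0).1
  have hN := h.snd_lt hk hlt
  have hcover := h.eq_or_mem_of_mem_Icc (m := c 1 - 1) ⟨by omega, by omega⟩
  simp only [Fin.exists_fin_two] at hcover
  rcases hcover with (_ | _) | hmem | (hmem | ⟨y, _, _⟩) | (hmem | ⟨y, hy, _⟩)
  · omega
  · omega
  · exact absurd hmem (h.notMem_of_dist_lt 1 (by simp only [Nat.dist]; omega))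
  · exact .inl hmem
  · omega
  · exact .inr hmem
  · exact absurd hy (h.notMem_of_lt (by omega))

theorem mem_iff_three_dvd (h : IsBipartiteLabeling c x k N) (hlt : c 0 < c 1)
    (hb : c 1 = 2 * c 0) {s r : ℕ} (hr : r < c 0) (hm : c 1 < m) (hN : m + s * c 0 + r = N) :
    m ∈ range x ↔ 3 ∣ s := by
  refine mem_iff_dvd_of_forall_mem_iff three_ne_zero
    (fun m hmem => (h.right_mem_Icc hmem).2)
    (fun m hm hmN => ⟨fun hmem i hi hi3 => ?_, ?_⟩) hr hm hN
  · obtain rfl | rfl : i = 1 ∨ i = 2 := by omega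
    · simpa using h.add_left_notMem 0 hmem
    · exact hb ▸ h.add_left_notMem 1 hmem
  · intro hnot
    have hnot1 : m + c 0 ∉ range x := by simpa using hnot 1
    have hnot2 : m + c 1 ∉ range x := hb ▸ hnot 2 (by omega) (by omega)
    exact (h.mem_or_add_mem_of_snd_lt hlt hm hmN).resolve_right (by tauto)

theorem snd_ne_two_mul_fst [Nonempty β] (h : IsBipartiteLabeling c x k N) (hk : 3 ≤ k)
    (hlt : c 0 < c 1) : c 1 ≠ 2 * c 0 := by
  intro hb
  have hk0 := (h.left_mem_Icc 0).1
  have hle := h.snd_add_two_mul_fst_le hk hlt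
  obtain ⟨s, r, hr, hs⟩ :=
    exists_add_mul_add_eq (a := c 0) (t := 4 * c 0) (N := N) (by omega) (by omega)
  have hsucc : (s + 1) * c 0 = s * c 0 + c 0 := Nat.succ_mul _ _
  have hs3 : ¬ 3 ∣ s := by
    rw [← h.mem_iff_three_dvd hlt hb (m := c 1 + c 1) hr (by omega) (by omega)]
    exact h.left_add_left_notMem 1 1
  have hsucc3 : ¬ 3 ∣ s + 1 := by
    rw [← h.mem_iff_three_dvd hlt hb (m := c 0 + c 1) hr (by omega) (by omega)]
    exact h.left_add_left_notMem 0 1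
  have hr0 : r = 0 := by
    by_contra hr0
    refine h.notMem_of_dist_lt 1 (m := c 1 + 1) (by simp only [Nat.dist]; omega) ?_
    rw [h.mem_iff_three_dvd hlt hb (s := s + 2) (r := r - 1) (by omega) (by omega) (by lia)]
    omega
  rcases h.snd_pred_add_mem hk hlt with hmem | hmem
  · rw [h.mem_iff_three_dvd hlt hb (s := s + 1) (r := 1) (by omega) (by omega) (by omega)] at hmem
    exact hsucc3 hmem
  · rw [h.mem_iff_three_dvd hlt hb (s := s) (r := 1) (by omega) (by omega) (by omega)] at hmem
    exact hs3 hmem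

theorem eq_four_mul_add_one_of_snd_add_eq [Nonempty β] (h : IsBipartiteLabeling c x k N)
    (hk : 3 ≤ k) (hlt : c 0 < c 1) (hN : c 1 + 2 * c 0 = N) : N = 4 * k + 1 := by
  have hk0 := (h.left_mem_Icc 0).1
  have hle := h.two_mul_fst_le_snd hk hlt
  have hne := h.snd_ne_two_mul_fst hk hlt
  have hb : c 1 = 2 * c 0 + 1 := by
    by_contra hb
    rcases h.snd_pred_add_mem hk hlt with hmem | hmem
    · exact h.notMem_of_lt_add_two_mul_fst hk hlt (by omega) (by omega) hmem
    · exact h.notMem_of_gt (by omega) hmem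
  have hgap : ∀ m, c 0 < m → m ≤ 2 * c 0 → m ∉ range x := fun m hm hm2 hmem =>
    h.add_left_notMem 1 hmem (h.mem_of_lt_add_fst hk hlt (by omega) (by omega))
  have ha : c 0 = k := by
    by_contra ha
    have hcover := h.eq_or_mem_of_mem_Icc (m := c 0 - 1) ⟨by omega, by omega⟩
    simp only [Fin.exists_fin_two] at hcover
    rcases hcover with (_ | _) | hmem | (hmem | ⟨y, hy, _⟩) | (hmem | ⟨y, hy, _⟩)
    · omega
    · omega
    · exact h.notMem_of_dist_lt 0 (by simp only [Nat.dist]; omega) hmem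
    · exact hgap _ (by omega) (by omega) hmem
    · exact h.notMem_of_lt (by omega) hy
    · exact h.notMem_of_lt_add_two_mul_fst hk hlt (by omega) (by omega) hmem
    · exact hgap y (by omega) (by omega) hy
  omega

theorem mem_iff_two_dvd (h : IsBipartiteLabeling c x k N) (hlt : c 0 < c 1) (hNb : N < 2 * c 1)
    {s r : ℕ} (hr : r < c 0) (hm : c 1 < m) (hN : m + s * c 0 + r = N) :
    m ∈ range x ↔ 2 ∣ s := by
  refine mem_iff_dvd_of_forall_mem_iff two_ne_zero
    (fun m hmem => (h.right_mem_Icc hmem).2)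
    (fun m hm hmN => ⟨fun hmem i hi hi2 => ?_, ?_⟩) hr hm hN
  · obtain rfl : i = 1 := by omega
    simpa using h.add_left_notMem 0 hmem
  · intro hnot
    have hnot1 : m + c 0 ∉ range x := by simpa using hnot 1
    have hgt : m + c 1 ∉ range x := h.notMem_of_gt (by omega)
    exact (h.mem_or_add_mem_of_snd_lt hlt hm hmN).resolve_right (by tauto)

theorem add_one_eq_two_mul_snd_and_mem [Nonempty β] (h : IsBipartiteLabeling c x k N)
    (hk : 3 ≤ k) (hlt : c 0 < c 1) (hNb : N < 2 * c 1) :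
    N + 1 = 2 * c 1 ∧ c 0 + c 1 + 1 ∈ range x := by
  have hk0 := (h.left_mem_Icc 0).1
  have hle := h.snd_add_two_mul_fst_le hk hlt
  obtain ⟨s, r, hr, hs⟩ :=
    exists_add_mul_add_eq (a := c 0) (t := c 0 + c 1) (N := N) (by omega) (by omega)
  have hs2 : ¬ 2 ∣ s := by
    rw [← h.mem_iff_two_dvd hlt hNb hr (by omega) hs]
    exact h.left_add_left_notMem 0 1
  have hr0 : r = 0 := by
    by_contra hr0
    refine h.notMem_of_dist_lt 1 (m := c 1 + 1) (by simp only [Nat.dist]; omega) ?_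
    rw [h.mem_iff_two_dvd hlt hNb (s := s + 1) (r := r - 1) (by omega) (by omega) (by lia)]
    omega
  constructor
  · rcases h.snd_pred_add_mem hk hlt with hmem | hmem
    · rw [h.mem_iff_two_dvd hlt hNb (s := s) (r := 1) (by omega) (by omega) (by omega)] at hmem
      exact absurd hmem hs2
    · have := (h.right_mem_Icc hmem).2
      omega
  · obtain ⟨t, rfl⟩ : ∃ t, s = t + 1 := ⟨s - 1, by omega⟩
    rw [h.mem_iff_two_dvd hlt hNb (s := t) (r := c 0 - 1) (by omega) (by omega) (by lia)]
    omega

theorem two_mul_snd_lt [Nonempty β] (h : IsBipartiteLabeling c x k N) (hk : 3 ≤ k)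
    (hlt : c 0 < c 1) (hN : c 1 + 2 * c 0 < N) : 2 * c 1 < N := by
  by_contra! hle
  have hk0 := (h.left_mem_Icc 0).1
  have hne : N ≠ c 1 + c 1 := by
    rintro rfl
    exact h.left_add_left_notMem 1 1 (h.mem_of_lt_add_fst hk hlt (by omega) le_rfl)
  obtain ⟨hNb, hsucc⟩ := h.add_one_eq_two_mul_snd_and_mem hk hlt (by omega)
  have hcover := h.eq_or_mem_of_mem_Icc (m := c 1 - c 0 - 1) ⟨by omega, by omega⟩
  simp only [Fin.exists_fin_two] at hcover
  rcases hcover with (_ | _) | hmem | (hmem | ⟨y, hy, _⟩) | (hmem | ⟨y, hy, _⟩)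
  · omega
  · omega
  · exact h.add_ne_two_mul_left 1 hmem hsucc (by omega)
  · exact h.notMem_of_dist_lt 1 (by simp only [Nat.dist]; omega) hmem
  · exact h.notMem_of_lt (by omega) hy
  · exact h.notMem_of_lt_add_two_mul_fst hk hlt (by omega) (by omega) hmem
  · exact h.notMem_of_dist_lt 0 (m := y) (by simp only [Nat.dist]; omega) hy

theorem not_two_mul_snd_lt [Nonempty β] (h : IsBipartiteLabeling c x k N) (hk : 3 ≤ k)
    (hlt : c 0 < c 1) (hN : c 1 + 2 * c 0 < N) : ¬ 2 * c 1 < N := by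
  intro hbN
  have hk0 := (h.left_mem_Icc 0).1
  have hba := h.two_mul_fst_le_snd hk hlt
  have hne := h.snd_ne_two_mul_fst hk hlt
  have hsecond : ∀ m, N < m + 2 * c 0 → m + c 0 ≤ N → m ∉ range x := fun m =>
    h.notMem_of_lt_add_two_mul_fst hk hlt
  have hle : 2 * c 1 + c 0 ≤ N := by
    by_contra! hlt'
    exact h.left_add_left_notMem 1 1 (h.mem_of_lt_add_fst hk hlt (by omega) (by omega))
  have hshift : ∀ m, N < m + c 1 + c 0 → m + c 1 ≤ N → m ∉ range x := fun m hm hmN hmem =>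
    h.add_left_notMem 1 hmem (h.mem_of_lt_add_fst hk hlt hm hmN)
  have hlt' : 2 * c 1 + c 0 < N := by
    refine lt_of_le_of_ne hle fun heq => ?_
    rcases h.snd_pred_add_mem hk hlt with hmem | hmem
    · exact hshift _ (by omega) (by omega) hmem
    · exact hsecond _ (by omega) (by omega) hmem
  have hthird : N - 2 * c 0 ∈ range x := by
    rcases h.mem_or_add_mem_of_snd_lt (m := N - 2 * c 0) hlt (by omega) (by omega) with
      hmem | hmem | hmem
    · exact hmem
    · exact absurd hmem (hsecond _ (by omega) (by omega))
    · exact absurd hmem (h.notMem_of_gt (by omega))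
  rcases h.mem_or_add_mem_of_snd_lt (m := N - c 1 - c 0) hlt (by omega) (by omega) with
    hmem | hmem | hmem
  · refine zero_ne_one (h.eq_of_add_left_mem (m := N - c 1 - 2 * c 0) (i := (0 : Fin 2)) (i' := 1)
      ?_ ?_)
    · convert hmem using 1
      omega
    · convert hthird using 1
      omega
  · exact hshift _ (by omega) (by omega) hmem
  · exact hsecond _ (by omega) (by omega) hmem

theorem eq_four_mul_add_one [Nonempty β] (h : IsBipartiteLabeling c x k N) (hk : 3 ≤ k) :
    N = 4 * k + 1 := by
  wlog hlt : c 0 < c 1 generalizing c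
  · refine this (h.comp_left (Equiv.swap 0 1)) ?_
    have hne := h.left_injective.ne (zero_ne_one (α := Fin 2))
    simp only [Function.comp_apply, Equiv.swap_apply_left, Equiv.swap_apply_right]
    omega
  rcases (h.snd_add_two_mul_fst_le hk hlt).eq_or_lt with heq | hN
  · exact h.eq_four_mul_add_one_of_snd_add_eq hk hlt heq
  · exact absurd (h.two_mul_snd_lt hk hlt hN) (h.not_two_mul_snd_lt hk hlt hN)

end TwoLeft

end IsBipartiteLabeling

/-! ### Labelings of `K(m, n)` -/

/-- The right side takes `1, …, n`. The numbers that follow are cut into blocks of length `n + 1`;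
each left vertex takes the top of a block and its edges take the rest. -/
theorem isBipartiteLabeling_one (m n : ℕ) :
    IsBipartiteLabeling (fun i : Fin m => (n + 1) * (i + 1) + n) (fun j : Fin n => (j : ℕ) + 1) 1
      (1 + (m + n) + m * n - 1) := by
  refine .of_Icc_subset_range (by simp only [Fintype.card_fin]; omega) ?_
  rintro l ⟨hl, hlN⟩
  have hdiv : (n + 1) * (l / (n + 1)) + l % (n + 1) = l := Nat.div_add_mod l (n + 1)
  have hr : l % (n + 1) < n + 1 := Nat.mod_lt _ n.succ_pos
  generalize l / (n + 1) = q, l % (n + 1) = r at hdiv hr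
  rcases q with _ | q
  · exact ⟨Sum.inl (Sum.inr ⟨l - 1, by omega⟩), Nat.sub_add_cancel hl⟩
  have hq : q < m := by
    by_contra! hmq
    have : (n + 1) * (m + 1) ≤ (n + 1) * (q + 1) := by gcongr
    lia
  rcases (Nat.lt_succ_iff_lt_or_eq.mp hr) with hrn | rfl
  · refine ⟨Sum.inr (⟨q, hq⟩, ⟨n - 1 - r, by omega⟩), ?_⟩
    simp only [bipartiteLabel, Sum.elim_inr, Nat.dist]
    omega
  · exact ⟨Sum.inl (Sum.inl ⟨q, hq⟩), hdiv⟩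

/-- The left side takes the top `m` labels. Below them, the right side takes the remainder `m`
modulo `m + 1`, and the edges at the `r`-th left vertex take the remainder `r`. -/
theorem isBipartiteLabeling_card_left {m : ℕ} (n : ℕ) (hm : 0 < m) :
    IsBipartiteLabeling (fun i : Fin m => (m + 1) * n + m + i) (fun j : Fin n => (m + 1) * j + m) m
      (m + (m + n) + m * n - 1) := by
  refine .of_Icc_subset_range (by simp only [Fintype.card_fin]; omega) ?_
  rintro l ⟨hl, hlN⟩
  rcases le_or_gt ((m + 1) * n + m) l with htop | hlt
  · exact ⟨Sum.inl (Sum.inl ⟨l - ((m + 1) * n + m), by lia⟩), Nat.add_sub_cancel' htop⟩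
  have hdiv : (m + 1) * (l / (m + 1)) + l % (m + 1) = l := Nat.div_add_mod l (m + 1)
  have hr : l % (m + 1) < m + 1 := Nat.mod_lt _ m.succ_pos
  generalize l / (m + 1) = q, l % (m + 1) = r at hdiv hr
  have hq : q ≤ n := by
    by_contra! hnq
    have : (m + 1) * (n + 1) ≤ (m + 1) * q := by gcongr; exact hnq
    lia
  rcases (Nat.lt_succ_iff_lt_or_eq.mp hr) with hrm | rfl
  · have hq0 : 0 < q := Nat.pos_of_ne_zero (by rintro rfl; omega)
    refine ⟨Sum.inr (⟨r, hrm⟩, ⟨n - q, by omega⟩), ?_⟩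
    have hsplit : (m + 1) * (n - q) + (m + 1) * q = (m + 1) * n := by
      rw [← mul_add, Nat.sub_add_cancel hq]
    simp only [bipartiteLabel, Sum.elim_inr, Nat.dist]
    omega
  · have hqn : q < n := lt_of_le_of_ne hq (by rintro rfl; omega)
    exact ⟨Sum.inl (Sum.inr ⟨q, hqn⟩), hdiv⟩

/-- For `n ≥ 2`, the complete bipartite graph `K(2, n)` is `k`-super graceful
iff `k = 1`, `k = 2`, or `k = n`. -/
theorem stmt_18 (n k : ℕ) (hn : 2 ≤ n) (hk : 1 ≤ k) :
    (∃ f : (Fin 2 ⊕ Fin n) ⊕ (completeBipartiteGraph (Fin 2) (Fin n)).edgeSet → ℕ,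
      IsKSuperGraceful (completeBipartiteGraph (Fin 2) (Fin n)) k f) ↔
    (k = 1 ∨ k = 2 ∨ k = n) := by
  rw [exists_isKSuperGraceful_completeBipartiteGraph_iff]
  simp only [Fintype.card_fin]
  constructor
  · rintro ⟨c, x, h⟩
    have : Nonempty (Fin n) := ⟨⟨0, by omega⟩⟩
    have hlarge : 3 ≤ k → k = n := fun hk3 => by
      have := h.eq_four_mul_add_one hk3
      omega
    omega
  · rintro (rfl | rfl | rfl)
    · exact ⟨_, _, isBipartiteLabeling_one 2 n⟩
    · exact ⟨_, _, isBipartiteLabeling_card_left n two_pos⟩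
    · have h := (isBipartiteLabeling_card_left 2 hk).symm
      rw [add_comm k 2, mul_comm k 2] at h
      exact ⟨_, _, h⟩
end

section
/- For every integer n ≥ 2 and r ∈ {2, 3}, the disjoint union P_{n+r} + P_n of a path on n+r vertices and a path on n vertices admits a 2-super graceful labeling whose set of edge labels is exactly {2, 3, …, 2n+r−1}. -/
/-!
Adding a constant to all vertex labels does not change the edge labels, so it suffices to
arrange `0, …, m`, where `m + 1 = 2 * n + r`, along the two paths so that the differences of
neighbours cover `2, …, m`: there are exactly `m - 1` edges, so a covering is a bijection.

Such arrangements extend from `n` to `n + 4` as long as the short path starts with `2` and the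
long path has an edge `{1, m}`. Add `4` to all labels, prepend `2, m + 7, 3, m + 5` to the short
path, and replace the edge `{m + 4, 5}` of the long path by the detour
`m + 4, 1, m + 8, 0, m + 6, 5`. Only the difference `m - 1` is lost, and the new edges supply it
together with `m + 1, …, m + 8`. The edge `{1, m + 8}` and the first label `2` allow the step to
be repeated.
-/

open SimpleGraph Set

/-- The differences of consecutive entries of `l`: the edge labels of a path whose vertices carry
the labels `l`. -/
def gaps (l : List ℕ) : List ℕ :=
  l.zipWith Nat.dist l.tail

theorem gaps_cons_cons (x y : ℕ) (l : List ℕ) :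
    gaps (x :: y :: l) = x.dist y :: gaps (y :: l) :=
  rfl

theorem gaps_append_cons_cons (l₁ l₂ : List ℕ) (x y : ℕ) :
    gaps (l₁ ++ x :: y :: l₂) = gaps (l₁ ++ [x]) ++ x.dist y :: gaps (y :: l₂) := by
  induction l₁ with
  | nil => rfl
  | cons a l ih =>
    cases l with
    | nil => rfl
    | cons b l => simpa only [List.cons_append, gaps_cons_cons, List.cons.injEq, true_and] using ih

theorem gaps_reverse (l : List ℕ) : gaps l.reverse = (gaps l).reverse := by
  induction l with
  | nil => rfl
  | cons x l ih =>
    cases l with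
    | nil => rfl
    | cons y l =>
      have hsplit : (x :: y :: l).reverse = l.reverse ++ [y, x] := by simp
      rw [hsplit, gaps_append_cons_cons, ← List.reverse_cons, ih, gaps_cons_cons,
        List.reverse_cons, Nat.dist_comm]
      rfl

theorem gaps_map_add (l : List ℕ) (c : ℕ) : gaps (l.map (· + c)) = gaps l := by
  simp only [gaps, ← List.map_tail, List.zipWith_map, Nat.dist_add_add_right]

theorem injective_and_range_eq_of_subset_range_s19 {α β : Type*} [Finite α] {f : α → β} {s : Set β}
    (hs : s ⊆ range f) (hcard : Nat.card α ≤ s.ncard) : Function.Injective f ∧ range f = s := by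
  have h_le : (range f).ncard ≤ Nat.card α := Finite.card_range_le f
  have h_range : s = range f := eq_of_subset_of_ncard_le hs (h_le.trans hcard)
  refine ⟨injOn_univ.mp (injOn_of_ncard_image_eq ?_), h_range.symm⟩
  rw [image_univ, ncard_univ]
  exact h_le.antisymm (h_range ▸ hcard)

/-- The label of an edge induced by a vertex labeling `g`. -/
def edgeDist {V : Type*} (g : V → ℕ) : Sym2 V → ℕ :=
  Sym2.lift ⟨fun u v ↦ (g u).dist (g v), fun _ _ ↦ Nat.dist_comm _ _⟩

theorem exists_isKSuperGraceful_of_Ico_subset_range {V : Type} [Fintype V] {G : SimpleGraph V}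
    {k : ℕ} (hk : 0 < k) (g : V → ℕ)
    (hE : Ico k (k + G.edgeSet.ncard) ⊆ range fun e : G.edgeSet ↦ edgeDist g e)
    (hV : Ico (k + G.edgeSet.ncard) (k + G.edgeSet.ncard + Fintype.card V) ⊆ range g) :
    ∃ f : V ⊕ G.edgeSet → ℕ, IsKSuperGraceful G k f ∧
      range (fun e ↦ f (Sum.inr e)) = Ico k (k + G.edgeSet.ncard) := by
  obtain ⟨hE_inj, hE_range⟩ := injective_and_range_eq_of_subset_range_s19 hE <| by
    rw [ncard_Ico_nat, Nat.card_coe_set_eq, add_tsub_cancel_left]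
  obtain ⟨hV_inj, hV_range⟩ := injective_and_range_eq_of_subset_range_s19 hV <| by
    rw [ncard_Ico_nat, Nat.card_eq_fintype_card, add_tsub_cancel_left]
  refine ⟨Sum.elim g fun e ↦ edgeDist g e, ⟨?_, ?_, fun u v _ ↦ Nat.dist_eq_max_sub_min⟩, hE_range⟩
  · refine hV_inj.sumElim hE_inj fun v e h ↦ ?_
    have hv := hV_range ▸ mem_range_self v
    have he := hE_range ▸ mem_range_self e
    exact absurd h (he.2.trans_le hv.1).ne'
  · rw [Sum.elim_range, hV_range, hE_range, union_comm, Ico_union_Ico_eq_Ico (by omega) (by omega)]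
    ext x
    simp only [mem_Ico, mem_Icc]
    omega

theorem edgeSet_pathGraph_succ (n : ℕ) :
    (pathGraph (n + 1)).edgeSet = range fun i : Fin n ↦ s(i.castSucc, i.succ) := by
  ext e
  induction e with | _ u v
  simp only [mem_edgeSet, pathGraph_adj, mem_range, Sym2.eq_iff, Fin.ext_iff, Fin.val_castSucc,
    Fin.val_succ]
  constructor
  · rintro (h | h)
    · exact ⟨⟨u, by omega⟩, .inl ⟨rfl, h⟩⟩
    · exact ⟨⟨v, by omega⟩, .inr ⟨rfl, h⟩⟩
  · rintro ⟨i, h⟩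
    omega

theorem ncard_edgeSet_pathGraph (n : ℕ) : (pathGraph n).edgeSet.ncard = n - 1 := by
  cases n with
  | zero => rw [edgeSet_eq_empty.mpr (Subsingleton.elim _ _), ncard_empty]
  | succ n =>
    have h_inj : Function.Injective fun i : Fin n ↦ s(i.castSucc, i.succ) := by
      intro i j hij
      simp only [Sym2.eq_iff, Fin.ext_iff, Fin.val_castSucc, Fin.val_succ] at hij
      omega
    rw [edgeSet_pathGraph_succ, ncard_range_of_injective h_inj, Nat.card_fin, add_tsub_cancel_right]

theorem ncard_edgeSet_sum {V W : Type*} (G : SimpleGraph V) (H : SimpleGraph W)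
    [Finite G.edgeSet] [Finite H.edgeSet] :
    (G ⊕g H).edgeSet.ncard = G.edgeSet.ncard + H.edgeSet.ncard := by
  simp only [← Nat.card_coe_set_eq, Nat.card_congr edgeSetSumEquiv, Nat.card_sum]

theorem exists_pathGraph_adj_of_mem_gaps {l : List ℕ} {d : ℕ} (hd : d ∈ gaps l) :
    ∃ i j : Fin l.length, (pathGraph l.length).Adj i j ∧ (l.get i).dist (l.get j) = d := by
  obtain ⟨i, hi, rfl⟩ := List.mem_iff_getElem.mp hd
  have hi' : i + 1 < l.length := by
    simp only [gaps, List.length_zipWith, List.length_tail] at hi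
    omega
  refine ⟨⟨i, by omega⟩, ⟨i + 1, hi'⟩, pathGraph_adj.mpr (.inl rfl), ?_⟩
  simp only [gaps, List.getElem_zipWith, List.getElem_tail, List.get_eq_getElem]

/-- The numbers `0, …, a + b - 1` can be arranged in two rows of lengths `a` and `b` whose gaps
cover `2, …, a + b - 1`. -/
def HasGapLabeling (a b : ℕ) : Prop :=
  ∃ A B : List ℕ, A.length = a ∧ B.length = b ∧
    (∀ v < a + b, v ∈ A ++ B) ∧ ∀ d < a + b, 2 ≤ d → d ∈ gaps A ++ gaps B

theorem HasGapLabeling.exists_isKSuperGraceful {a b : ℕ} (ha : 0 < a) (hb : 0 < b)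
    (h : HasGapLabeling a b) :
    ∃ f : (Fin a ⊕ Fin b) ⊕ (pathGraph a ⊕g pathGraph b).edgeSet → ℕ,
      IsKSuperGraceful (pathGraph a ⊕g pathGraph b) 2 f ∧
      range (fun e ↦ f (Sum.inr e)) = Ico 2 (a + b) := by
  obtain ⟨A, B, rfl, rfl, h_mem, h_gaps⟩ := h
  have hq : 2 + (pathGraph A.length ⊕g pathGraph B.length).edgeSet.ncard =
      A.length + B.length := by
    rw [ncard_edgeSet_sum, ncard_edgeSet_pathGraph, ncard_edgeSet_pathGraph]
    omega
  let g : Fin A.length ⊕ Fin B.length → ℕ :=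
    fun u ↦ Sum.elim A.get B.get u + (A.length + B.length)
  rw [← hq]
  refine exists_isKSuperGraceful_of_Ico_subset_range two_pos g ?_ ?_
  all_goals rw [hq]
  · rintro d ⟨h2, hd⟩
    rcases List.mem_append.mp (h_gaps d hd h2) with hA | hB
    · obtain ⟨i, j, hij, rfl⟩ := exists_pathGraph_adj_of_mem_gaps hA
      exact ⟨⟨s(.inl i, .inl j), (mem_edgeSet _).mpr (sum_adj_inl.mpr hij)⟩,
        Nat.dist_add_add_right _ _ _⟩
    · obtain ⟨i, j, hij, rfl⟩ := exists_pathGraph_adj_of_mem_gaps hB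
      exact ⟨⟨s(.inr i, .inr j), (mem_edgeSet _).mpr (sum_adj_inr.mpr hij)⟩,
        Nat.dist_add_add_right _ _ _⟩
  · rintro v ⟨hv, hv'⟩
    obtain ⟨w, rfl⟩ := Nat.exists_eq_add_of_le' hv
    have hw : w < A.length + B.length := by
      simp only [Fintype.card_sum, Fintype.card_fin] at hv'
      omega
    rcases List.mem_append.mp (h_mem w hw) with hA | hB
    · obtain ⟨i, rfl⟩ := List.get_of_mem hA
      exact ⟨.inl i, rfl⟩
    · obtain ⟨i, rfl⟩ := List.get_of_mem hB
      exact ⟨.inr i, rfl⟩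

/-- The rows `(1 :: X).reverse ++ m :: Y` and `2 :: Z` contain `0, …, m`, and their gaps cover
`2, …, m`. The adjacent entries `1` and `m` supply the gap `m - 1`; the three pieces `1 :: X`,
`m :: Y`, `2 :: Z` are kept apart because the recursion reassembles them. -/
structure IsSplitLabeling (m : ℕ) (X Y Z : List ℕ) : Prop where
  mem : ∀ v ≤ m, v ∈ 1 :: X ∨ v ∈ m :: Y ∨ v ∈ 2 :: Z
  mem_gaps : ∀ d ≤ m, 2 ≤ d →
    d + 1 = m ∨ d ∈ gaps (1 :: X) ∨ d ∈ gaps (m :: Y) ∨ d ∈ gaps (2 :: Z)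

/-- There is a split labeling with rows of lengths `a` and `b`. -/
def HasSplitLabeling (a b : ℕ) : Prop :=
  ∃ (m : ℕ) (X Y Z : List ℕ), m + 1 = a + b ∧ X.length + Y.length + 2 = a ∧ Z.length + 1 = b ∧
    IsSplitLabeling m X Y Z

theorem gaps_one_cons_map_add (m : ℕ) (l : List ℕ) :
    gaps (1 :: (m :: l).map (· + 4)) = (m + 3) :: gaps (m :: l) := by
  rw [← gaps_map_add (m :: l) 4, List.map_cons, gaps_cons_cons, Nat.dist_eq_sub_of_le (by omega)]
  rfl

theorem gaps_add_eight_cons_map_add (m : ℕ) (l : List ℕ) :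
    gaps ((m + 8) :: 0 :: (m + 6) :: (1 :: l).map (· + 4)) =
      (m + 8) :: (m + 6) :: (m + 1) :: gaps (1 :: l) := by
  rw [← gaps_map_add (1 :: l) 4, List.map_cons]
  simp only [gaps_cons_cons, Nat.dist_zero_left, Nat.dist_zero_right,
    Nat.dist_eq_sub_of_le_right (show 1 + 4 ≤ m + 6 by omega)]
  rfl

theorem gaps_two_cons_map_add (m : ℕ) (l : List ℕ) :
    gaps (2 :: (m + 7) :: 3 :: (m + 5) :: (2 :: l).map (· + 4)) =
      (m + 5) :: (m + 4) :: (m + 2) :: Nat.dist (m + 5) 6 :: gaps (2 :: l) := by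
  rw [← gaps_map_add (2 :: l) 4, List.map_cons]
  simp only [gaps_cons_cons, Nat.dist_eq_sub_of_le (show 2 ≤ m + 7 by omega),
    Nat.dist_eq_sub_of_le_right (show 3 ≤ m + 7 by omega),
    Nat.dist_eq_sub_of_le (show 3 ≤ m + 5 by omega)]
  rfl

theorem IsSplitLabeling.add_eight {m : ℕ} {X Y Z : List ℕ} (h : IsSplitLabeling m X Y Z) :
    IsSplitLabeling (m + 8) ((m :: Y).map (· + 4)) (0 :: (m + 6) :: (1 :: X).map (· + 4))
      ((m + 7) :: 3 :: (m + 5) :: (2 :: Z).map (· + 4)) where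
  mem v hv := by
    have h_cases : v < 4 ∨ m + 5 ≤ v ∨ ∃ w ≤ m, v = w + 4 := by
      by_cases hv' : v < 4 ∨ m + 5 ≤ v
      · tauto
      · exact .inr (.inr ⟨v - 4, by omega, by omega⟩)
    rcases h_cases with hsmall | hlarge | ⟨w, hw, rfl⟩
    · interval_cases v <;> simp
    · obtain rfl | rfl | rfl | rfl : v = m + 5 ∨ v = m + 6 ∨ v = m + 7 ∨ v = m + 8 := by omega
      all_goals simp
    · have h_shift (l : List ℕ) (hl : w ∈ l) : w + 4 ∈ l.map (· + 4) := List.mem_map_of_mem hl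
      rcases h.mem w hw with hX | hY | hZ
      · exact .inr (.inl (.tail _ (.tail _ (.tail _ (h_shift _ hX)))))
      · exact .inl (.tail _ (h_shift _ hY))
      · exact .inr (.inr (.tail _ (.tail _ (.tail _ (.tail _ (h_shift _ hZ))))))
  mem_gaps d hd h2 := by
    simp only [gaps_one_cons_map_add, gaps_add_eight_cons_map_add, gaps_two_cons_map_add,
      List.mem_cons]
    by_cases h_old : d ≤ m ∧ d + 1 ≠ m
    · have := h.mem_gaps d h_old.1 h2
      tauto
    · have h_lost : d + 1 = m → d = Nat.dist (m + 5) 6 := by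
        simp only [Nat.dist]
        omega
      omega

theorem HasSplitLabeling.add_four {a b : ℕ} :
    HasSplitLabeling a b → HasSplitLabeling (a + 4) (b + 4) := by
  rintro ⟨m, X, Y, Z, hm, ha, hb, h⟩
  refine ⟨_, _, _, _, ?_, ?_, ?_, h.add_eight⟩
  · omega
  all_goals
    simp only [List.length_cons, List.length_map]
    omega

theorem HasSplitLabeling.hasGapLabeling {a b : ℕ} : HasSplitLabeling a b → HasGapLabeling a b := by
  rintro ⟨m, X, Y, Z, hm, ha, hb, h⟩
  have h_gaps : gaps ((1 :: X).reverse ++ m :: Y) =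
      (gaps (1 :: X)).reverse ++ Nat.dist 1 m :: gaps (m :: Y) := by
    rw [← gaps_reverse, List.reverse_cons, List.append_assoc, List.singleton_append,
      gaps_append_cons_cons]
  refine ⟨(1 :: X).reverse ++ m :: Y, 2 :: Z, ?_, hb, fun v hv ↦ ?_, fun d hd h2 ↦ ?_⟩
  · simp only [List.length_append, List.length_reverse, List.length_cons]
    omega
  · simpa only [List.mem_append, List.mem_reverse, or_assoc] using h.mem v (by omega)
  · simp only [h_gaps, List.mem_append, List.mem_reverse, List.mem_cons]
    rcases h.mem_gaps d (by omega) h2 with hd' | hX | hY | hZ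
    · have : d = Nat.dist 1 m := by
        simp only [Nat.dist]
        omega
      exact .inl (.inr (.inl this))
    · exact .inl (.inl hX)
    · exact .inl (.inr (.inr hY))
    · exact .inr hZ

-- An exhaustive search shows that `HasSplitLabeling 6 4` is false, so the recursion skips `n = 3`.
theorem hasSplitLabeling_two : ∀ n ≠ 3, HasSplitLabeling (n + 3) (n + 1)
  | 0, _ => ⟨3, [], [0], [], rfl, rfl, rfl, by decide, by decide⟩
  | 1, _ => ⟨5, [], [0, 3], [4], rfl, rfl, rfl, by decide, by decide⟩
  | 2, _ => ⟨7, [6], [0, 4], [5, 3], rfl, rfl, rfl, by decide, by decide⟩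
  | 4, _ => (hasSplitLabeling_two 0 (by decide)).add_four
  | 5, _ => (hasSplitLabeling_two 1 (by decide)).add_four
  | 6, _ => (hasSplitLabeling_two 2 (by decide)).add_four
  | 7, _ => ⟨17, [16, 3, 15, 5, 9], [0, 14, 7], [13, 4, 12, 6, 11, 8, 10], rfl, rfl, rfl,
      by decide, by decide⟩
  | n + 8, _ => (hasSplitLabeling_two (n + 4) (by omega)).add_four

theorem hasSplitLabeling_three : ∀ n, HasSplitLabeling (n + 4) (n + 1)
  | 0 => ⟨4, [3], [0], [], rfl, rfl, rfl, by decide, by decide⟩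
  | 1 => ⟨6, [5], [0, 3], [4], rfl, rfl, rfl, by decide, by decide⟩
  | 2 => ⟨8, [5, 3], [0, 6], [7, 4], rfl, rfl, rfl, by decide, by decide⟩
  | 3 => ⟨10, [6], [0, 8, 4, 7], [9, 3, 5], rfl, rfl, rfl, by decide, by decide⟩
  | n + 4 => (hasSplitLabeling_three n).add_four

theorem hasGapLabeling_six_four : HasGapLabeling 6 4 :=
  ⟨[4, 9, 0, 8, 1, 7], [2, 6, 3, 5], rfl, rfl, by decide, by decide⟩

theorem hasGapLabeling_add {n r : ℕ} (hn : 1 ≤ n) (hr : r = 2 ∨ r = 3) :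
    HasGapLabeling (n + r) n := by
  obtain ⟨n, rfl⟩ := Nat.exists_eq_add_of_le' hn
  rcases hr with rfl | rfl
  · obtain rfl | hn3 := eq_or_ne n 3
    · exact hasGapLabeling_six_four
    · exact (hasSplitLabeling_two n hn3).hasGapLabeling
  · exact (hasSplitLabeling_three n).hasGapLabeling

/-- For `n ≥ 2` and `r ∈ {2, 3}`, the disjoint union `P_{n+r} + P_n` of two paths
is `2`-super graceful with edge-label set `{2, …, 2n+r-1}`. -/
theorem stmt_19 (n r : ℕ) (hn : 2 ≤ n) (hr : r = 2 ∨ r = 3) :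
    ∃ f : (Fin (n + r) ⊕ Fin n) ⊕
        (SimpleGraph.pathGraph (n + r) ⊕g SimpleGraph.pathGraph n).edgeSet → ℕ,
      IsKSuperGraceful (SimpleGraph.pathGraph (n + r) ⊕g SimpleGraph.pathGraph n) 2 f ∧
      Set.range (fun e : (SimpleGraph.pathGraph (n + r) ⊕g
          SimpleGraph.pathGraph n).edgeSet => f (Sum.inr e)) =
        Set.Icc 2 (2 * n + r - 1) := by
  have h_lab : HasGapLabeling (n + r) n := hasGapLabeling_add (by omega) hr
  obtain ⟨f, hf, h_range⟩ := h_lab.exists_isKSuperGraceful (by omega) (by omega)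
  refine ⟨f, hf, h_range.trans ?_⟩
  ext d
  simp only [mem_Ico, mem_Icc]
  omega
end
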